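/- Let ω ∈ {0,1}^{ℕ*} be a configuration with ω_z = 0 for some z > 1, and let f be a bounded measurable function on {0,1}^{ℕ*}. Then for every t ≥ 0: | P_t⁺f(ω) − P_t⁺(μ_{{1}}(f))(ω) | ≤ √2 · ‖f‖_∞ · (1/min(p,q))^z · e^{−t·gap}. (Local relaxation to equilibrium on the left of a zero present in the initial configuration, valid also for f with infinite support.) -/

import Mathlib

open MeasureTheory ProbabilityTheory Filter

noncomputable section

/-! ### The East model on `ℤ` (used only to define the spectral gap) -/

/-- Configurations of the East model on `ℤ`: `false` = empty, `true` = occupied. -/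
abbrev Config : Type := ℤ → Bool

/-- The configuration `ω` flipped at site `x`. -/
def flipAt (ω : Config) (x : ℤ) : Config := fun y => if y = x then !ω x else ω y

/-- `f` depends only on the coordinates in `S`. -/
def DependsOnF (f : Config → ℝ) (S : Set ℤ) : Prop :=
  ∀ ω ω' : Config, (∀ x ∈ S, ω x = ω' x) → f ω = f ω'

/-- A cylinder (local) function on `ℤ`-configurations. -/
def IsCylinder (f : Config → ℝ) : Prop := ∃ S : Finset ℤ, DependsOnF f ↑S

/-- The East generator on `ℤ` at density `p` of ones. -/
def eastGen (p : ℝ) (f : Config → ℝ) (ω : Config) : ℝ :=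
  ∑' x : ℤ, (if ω (x + 1) = false then (1 : ℝ) else 0) *
    (if ω x = false then p else 1 - p) * (f (flipAt ω x) - f ω)

/-- The spectral gap of the East model on `ℤ` at density `p`, with equilibrium measure `μ`. -/
def gapZ (p : ℝ) (μ : Measure Config) : ℝ :=
  sInf {r | ∃ f : Config → ℝ, IsCylinder f ∧ 0 < variance f μ ∧
    r = (-∫ ω, f ω * eastGen p f ω ∂μ) / variance f μ}

/-! ### The East model on `ℕ* = {1, 2, …}` -/

/-- The positive natural numbers `ℕ* = {1, 2, …}`. -/
abbrev PosNat : Type := {n : ℕ // 0 < n}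

/-- Configurations of the East model on `ℕ*`. -/
abbrev ConfigP : Type := PosNat → Bool

/-- The site `1 ∈ ℕ*`. -/
def onePos : PosNat := ⟨1, Nat.one_pos⟩

/-- The right neighbour `x + 1` of a site `x ∈ ℕ*`. -/
def succP (x : PosNat) : PosNat := ⟨x.1 + 1, Nat.succ_pos _⟩

/-- The configuration `ω` flipped at site `x`. -/
def flipAtP (ω : ConfigP) (x : PosNat) : ConfigP := fun y => if y = x then !ω x else ω y

/-- A cylinder (local) function on `ℕ*`-configurations. -/
def IsCylinderP (f : ConfigP → ℝ) : Prop :=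
  ∃ S : Finset PosNat, ∀ ω ω' : ConfigP, (∀ x ∈ S, ω x = ω' x) → f ω = f ω'

/-- The East generator on `ℕ*` at density `p` of ones. -/
def eastGenP (p : ℝ) (f : ConfigP → ℝ) (ω : ConfigP) : ℝ :=
  ∑' x : PosNat, (if ω (succP x) = false then (1 : ℝ) else 0) *
    (if ω x = false then p else 1 - p) * (f (flipAtP ω x) - f ω)

/-- `f` averaged over the coordinate at site `1` w.r.t. Bernoulli(p). -/
def avg1P (p : ℝ) (f : ConfigP → ℝ) (ω : ConfigP) : ℝ :=
  p * f (Function.update ω onePos true) + (1 - p) * f (Function.update ω onePos false)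

/-- The East process on `ℕ*` at density `p`, together with the product Bernoulli(p)
measure on `ℤ`-configurations (used to define the spectral gap on `ℤ`). -/
structure EastPlus where
  /-- equilibrium density of ones -/
  p : ℝ
  hp0 : 0 < p
  hp1 : p < 1
  /-- the Markov semigroup on `ℕ*` -/
  Pp : ℝ → Kernel ConfigP ConfigP
  markov : ∀ t : ℝ, IsMarkovKernel (Pp t)
  P0 : Pp 0 = Kernel.id
  semigroup : ∀ s t : ℝ, 0 ≤ s → 0 ≤ t → Pp (t + s) = (Pp s).comp (Pp t)
  feller : ∀ t : ℝ, 0 ≤ t → ∀ f : ConfigP → ℝ, Continuous f →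
    Continuous fun ω : ConfigP => ∫ η, f η ∂(Pp t ω)
  timeCont : ∀ f : ConfigP → ℝ, Continuous f → ∀ ω : ConfigP,
    Continuous fun t : ℝ => ∫ η, f η ∂(Pp t ω)
  generator : ∀ f : ConfigP → ℝ, IsCylinderP f → ∀ ω : ConfigP,
    HasDerivWithinAt (fun u : ℝ => ∫ η, f η ∂(Pp u ω)) (eastGenP p f ω) (Set.Ici 0) 0
  /-- the product Bernoulli(p) measure on `ℤ`-configurations -/
  μ : Measure Config
  μprob : IsProbabilityMeasure μ
  μprod : ∀ (S : Finset ℤ) (σ : ℤ → Bool),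
    μ {ω : Config | ∀ x ∈ S, ω x = σ x} = ∏ x ∈ S, ENNReal.ofReal (if σ x then p else 1 - p)


/-! ### Generic facts on functions depending on finitely many coordinates -/

lemma cyl_continuous {ι : Type*} (F : (ι → Bool) → ℝ) (S : Finset ι)
    (h : ∀ ω ω' : ι → Bool, (∀ x ∈ S, ω x = ω' x) → F ω = F ω') : Continuous F := by
  classical
  have : F = (fun σ : S → Bool => F (fun x => if hx : x ∈ S then σ ⟨x, hx⟩ else false)) ∘
      (fun ω : ι → Bool => fun x : S => ω x) := by
    funext ω
    apply h
    intro x hx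
    simp [hx]
  rw [this]
  apply Continuous.comp
  · exact continuous_of_discreteTopology
  · fun_prop

lemma cont_bounded {ι : Type*} (F : (ι → Bool) → ℝ) (h : Continuous F) :
    ∃ C, ∀ ω, |F ω| ≤ C := by
  obtain ⟨C, hC⟩ := isCompact_univ.exists_bound_of_continuousOn h.continuousOn
  exact ⟨C, fun ω => hC ω (Set.mem_univ _)⟩

lemma cont_integrable {ι : Type*} [Countable ι] (F : (ι → Bool) → ℝ) (h : Continuous F)
    (μ : Measure (ι → Bool)) [IsFiniteMeasure μ] : Integrable F μ := by
  obtain ⟨C, hC⟩ := cont_bounded F h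
  exact Integrable.of_bound h.measurable.aestronglyMeasurable C
    (Eventually.of_forall hC)

/-! ### Resampling for the product measure -/

lemma resample_cyl (E : EastPlus) (S : Finset ℤ) (x : ℤ) (hx : x ∈ S) (σ : ℤ → Bool) :
    E.μ.real {ω : Config | ∀ y ∈ S, ω y = σ y} =
      (if σ x then E.p else 1 - E.p) * E.μ.real {ω : Config | ∀ y ∈ S.erase x, ω y = σ y} := by
  have h0 := E.hp0
  have h1 := E.hp1
  rw [Measure.real, Measure.real, E.μprod, E.μprod, ← Finset.mul_prod_erase S _ hx,
    ENNReal.toReal_mul, ENNReal.toReal_ofReal]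
  split_ifs <;> linarith

lemma cyl_meas (S : Finset ℤ) (σ : ℤ → Bool) :
    MeasurableSet {ω : Config | ∀ y ∈ S, ω y = σ y} := by
  have : {ω : Config | ∀ y ∈ S, ω y = σ y} = ⋂ y ∈ S, {ω : Config | ω y = σ y} := by
    ext; simp
  rw [this]
  refine Finset.measurableSet_biInter S (fun y _ => ?_)
  exact measurableSet_eq_fun (measurable_pi_apply y) measurable_const

lemma resample (E : EastPlus) (F : Config → ℝ) (hF : IsCylinder F) (x : ℤ) :
    ∫ ω, F ω ∂E.μ = ∫ ω, (E.p * F (Function.update ω x true)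
      + (1 - E.p) * F (Function.update ω x false)) ∂E.μ := by
  classical
  have := E.μprob
  obtain ⟨S0, hS0⟩ := hF
  set S := insert x S0 with hS
  have hxS : x ∈ S := by simp [hS]
  have hdep : ∀ ω ω' : Config, (∀ y ∈ S, ω y = ω' y) → F ω = F ω' := by
    intro ω ω' h
    exact hS0 ω ω' (fun y hy => h y (by simp [hS]; right; exact_mod_cast hy))
  let ext : (S → Bool) → Config := fun σ y => if hy : y ∈ S then σ ⟨y, hy⟩ else false
  let ind : (S → Bool) → Config → ℝ := fun σ =>
    Set.indicator {ω : Config | ∀ y ∈ S, ω y = ext σ y} 1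
  have hdecomp : ∀ ω, F ω = ∑ σ : S → Bool, F (ext σ) * ind σ ω := by
    intro ω
    rw [Finset.sum_eq_single (fun y : S => ω y)]
    · have : ω ∈ {ω' : Config | ∀ y ∈ S, ω' y = ext (fun y : S => ω y) y} := by
        intro y hy
        simp [ext, hy]
      simp only [ind, Set.indicator_of_mem this, Pi.one_apply, mul_one]
      exact hdep _ _ this
    · intro σ _ hσ
      have : ω ∉ {ω' : Config | ∀ y ∈ S, ω' y = ext σ y} := by
        intro h
        apply hσ
        funext y
        have := h y.1 y.2
        simp [ext] at this
        exact this.symm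
      simp only [ind, Set.indicator_of_notMem this, mul_zero]
    · simp
  have hint : ∀ σ, Integrable (ind σ) E.μ := fun σ =>
    (integrable_const (1 : ℝ)).indicator (cyl_meas S _)
  have hupd : ∀ σ ω, E.p * ind σ (Function.update ω x true)
      + (1 - E.p) * ind σ (Function.update ω x false) =
      (if ext σ x then E.p else 1 - E.p) *
        Set.indicator {ω : Config | ∀ y ∈ S.erase x, ω y = ext σ y} 1 ω := by
    intro σ ω
    have key : ∀ b, ind σ (Function.update ω x b) = if ext σ x = b then
        Set.indicator {ω : Config | ∀ y ∈ S.erase x, ω y = ext σ y} (1 : Config → ℝ) ω else 0 := by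
      intro b
      simp only [ind, Set.indicator_apply, Set.mem_ofPred_eq, Pi.one_apply]
      rw [← ite_and]
      congr 1
      rw [eq_iff_iff]
      constructor
      · intro h
        refine ⟨?_, ?_⟩
        · have := h x hxS
          simpa using this.symm
        · intro y hy
          have hy' := Finset.mem_erase.1 hy
          have := h y hy'.2
          rwa [Function.update_of_ne hy'.1] at this
      · rintro ⟨h1, h2⟩ y hy
        by_cases hyx : y = x
        · subst hyx; simp [h1]
        · rw [Function.update_of_ne hyx]
          exact h2 y (Finset.mem_erase.2 ⟨hyx, hy⟩)
    rw [key, key]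
    cases ext σ x <;> simp
  have hint2 : ∀ σ, Integrable (fun ω => Set.indicator
      {ω : Config | ∀ y ∈ S.erase x, ω y = ext σ y} (1 : Config → ℝ) ω) E.μ := fun σ =>
    (integrable_const (1 : ℝ)).indicator (cyl_meas _ _)
  have hL : ∫ ω, F ω ∂E.μ = ∑ σ : S → Bool, F (ext σ) * ∫ ω, ind σ ω ∂E.μ := by
    rw [integral_congr_ae (Eventually.of_forall hdecomp)]
    rw [integral_finsetSum _ (fun σ _ => ((hint σ).const_mul _))]
    simp_rw [integral_const_mul]
  have hR : ∫ ω, (E.p * F (Function.update ω x true)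
      + (1 - E.p) * F (Function.update ω x false)) ∂E.μ
      = ∑ σ : S → Bool, F (ext σ) * ∫ ω, (if ext σ x then E.p else 1 - E.p) *
        Set.indicator {ω : Config | ∀ y ∈ S.erase x, ω y = ext σ y} 1 ω ∂E.μ := by
    have : ∀ ω, (E.p * F (Function.update ω x true)
      + (1 - E.p) * F (Function.update ω x false)) = ∑ σ : S → Bool, F (ext σ) *
        ((if ext σ x then E.p else 1 - E.p) *
        Set.indicator {ω : Config | ∀ y ∈ S.erase x, ω y = ext σ y} 1 ω) := by
      intro ω
      rw [hdecomp (Function.update ω x true), hdecomp (Function.update ω x false),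
        Finset.mul_sum, Finset.mul_sum, ← Finset.sum_add_distrib]
      refine Finset.sum_congr rfl (fun σ _ => ?_)
      rw [← hupd]
      ring
    simp_rw [this]
    rw [integral_finsetSum _ (fun σ _ => (((hint2 σ).const_mul _).const_mul _))]
    simp_rw [integral_const_mul]
  rw [hL, hR]
  refine Finset.sum_congr rfl (fun σ _ => ?_)
  congr 1
  rw [integral_const_mul, integral_indicator_one (cyl_meas _ _)]
  rw [integral_indicator_one (cyl_meas _ _)]
  exact resample_cyl E S x hxS _

/-- flip rate on `ℤ` without constraint -/
def rr (p : ℝ) (b : Bool) : ℝ := if b = false then p else 1 - p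

lemma stationary (E : EastPlus) (c ψ : Config → ℝ) (x : ℤ) (hc : IsCylinder c)
    (hψ : IsCylinder ψ) (hcx : ∀ ω b, c (Function.update ω x b) = c ω) :
    ∫ ω, c ω * rr E.p (ω x) * (ψ (flipAt ω x) - ψ ω) ∂E.μ = 0 := by
  classical
  rw [resample E _ _ x]
  · have : ∀ ω, (E.p * (c (Function.update ω x true) * rr E.p ((Function.update ω x true) x) *
        (ψ (flipAt (Function.update ω x true) x) - ψ (Function.update ω x true)))
      + (1 - E.p) * (c (Function.update ω x false) * rr E.p ((Function.update ω x false) x) *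
        (ψ (flipAt (Function.update ω x false) x) - ψ (Function.update ω x false)))) = 0 := by
      intro ω
      have h : ∀ b, flipAt (Function.update ω x b) x = Function.update ω x (!b) := by
        intro b
        funext y
        by_cases hy : y = x
        · subst hy; simp [flipAt]
        · simp [flipAt, hy]
      rw [h, h, hcx, hcx]
      simp [rr]
      ring
    simp_rw [this]
    simp
  · obtain ⟨S1, h1⟩ := hc
    obtain ⟨S2, h2⟩ := hψ
    refine ⟨insert x (S1 ∪ S2), fun ω ω' h => ?_⟩
    beta_reduce
    rw [h1 ω ω' (fun y hy => h y (by simp at hy ⊢; tauto)),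
      h2 ω ω' (fun y hy => h y (by simp at hy ⊢; tauto)), h x (by simp)]
    rw [h2 (flipAt ω x) (flipAt ω' x)]
    intro y hy
    simp only [flipAt]
    rw [h x (by simp), h y (by simp at hy ⊢; tauto)]

/-! ### Gluing and partial averages -/

def glue (z : ℕ) (ω : Config) (η : ConfigP) : ConfigP :=
  fun x => if x.1 < z then ω (x.1 : ℤ) else η x

def MM (E : EastPlus) (z : ℕ) (Φ : ConfigP → ℝ) (η : ConfigP) : ℝ := ∫ ω, Φ (glue z ω η) ∂E.μ

def rate (p : ℝ) (ω : ConfigP) (x : PosNat) : ℝ :=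
  (if ω (succP x) = false then (1 : ℝ) else 0) * rr p (ω x)

def sites (n : ℕ) : Finset PosNat :=
  (Finset.range n).image (fun i => (⟨i + 1, Nat.succ_pos i⟩ : PosNat))

lemma mem_sites {n : ℕ} {x : PosNat} : x ∈ sites n ↔ x.1 ≤ n := by
  simp only [sites, Finset.mem_image, Finset.mem_range]
  constructor
  · rintro ⟨i, hi, rfl⟩; exact hi
  · intro h
    have := x.2
    exact ⟨x.1 - 1, by omega, Subtype.ext (by simp; omega)⟩

lemma glue_cyl (z : ℕ) (Φ : ConfigP → ℝ) (η : ConfigP) :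
    IsCylinder (fun ω => Φ (glue z ω η)) := by
  refine ⟨Finset.Icc 0 (z : ℤ), fun ω ω' h => ?_⟩
  beta_reduce
  congr 1
  funext x
  simp only [glue]
  split_ifs with hx
  · exact h _ (by simp; omega)
  · rfl

lemma isCyl_integrable (E : EastPlus) (F : Config → ℝ) (hF : IsCylinder F) :
    Integrable F E.μ := by
  have := E.μprob
  obtain ⟨S, hS⟩ := hF
  exact cont_integrable F (cyl_continuous F S (fun ω ω' h => hS ω ω' (by simpa using h))) _

lemma isCyl_continuous (F : Config → ℝ) (hF : IsCylinder F) : Continuous F := by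
  obtain ⟨S, hS⟩ := hF
  exact cyl_continuous F S (fun ω ω' h => hS ω ω' (by simpa using h))

lemma glue_int (E : EastPlus) (z : ℕ) (Φ : ConfigP → ℝ) (η : ConfigP) :
    Integrable (fun ω => Φ (glue z ω η)) E.μ :=
  isCyl_integrable E _ (glue_cyl z Φ η)

lemma MM_add (E : EastPlus) (z : ℕ) (Φ Ψ : ConfigP → ℝ) (η : ConfigP) :
    MM E z (fun ω => Φ ω + Ψ ω) η = MM E z Φ η + MM E z Ψ η :=
  integral_add (glue_int E z Φ η) (glue_int E z Ψ η)

lemma MM_sub (E : EastPlus) (z : ℕ) (Φ Ψ : ConfigP → ℝ) (η : ConfigP) :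
    MM E z (fun ω => Φ ω - Ψ ω) η = MM E z Φ η - MM E z Ψ η :=
  integral_sub (glue_int E z Φ η) (glue_int E z Ψ η)

lemma MM_mul (E : EastPlus) (z : ℕ) (a : ℝ) (Φ : ConfigP → ℝ) (η : ConfigP) :
    MM E z (fun ω => a * Φ ω) η = a * MM E z Φ η :=
  integral_const_mul a _

lemma MM_sum (E : EastPlus) (z : ℕ) {ι : Type*} (s : Finset ι) (Φ : ι → ConfigP → ℝ)
    (η : ConfigP) :
    MM E z (fun ω => ∑ i ∈ s, Φ i ω) η = ∑ i ∈ s, MM E z (Φ i) η :=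
  integral_finsetSum s (fun i _ => glue_int E z (Φ i) η)

lemma MM_mono (E : EastPlus) (z : ℕ) (Φ Ψ : ConfigP → ℝ) (η : ConfigP)
    (h : ∀ ω, Φ (glue z ω η) ≤ Ψ (glue z ω η)) : MM E z Φ η ≤ MM E z Ψ η :=
  integral_mono (glue_int E z Φ η) (glue_int E z Ψ η) h

lemma MM_congr (E : EastPlus) (z : ℕ) (Φ Ψ : ConfigP → ℝ) (η : ConfigP)
    (h : ∀ ω, Φ (glue z ω η) = Ψ (glue z ω η)) : MM E z Φ η = MM E z Ψ η :=
  integral_congr_ae (Eventually.of_forall h)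

lemma MM_const (E : EastPlus) (z : ℕ) (a : ℝ) (η : ConfigP) :
    MM E z (fun _ => a) η = a := by
  have := E.μprob
  simp [MM]

lemma rr_nonneg (E : EastPlus) (b : Bool) : 0 ≤ rr E.p b := by
  have h0 := E.hp0
  have h1 := E.hp1
  unfold rr
  split_ifs <;> linarith

lemma rr_le_one (E : EastPlus) (b : Bool) : rr E.p b ≤ 1 := by
  have h0 := E.hp0
  have h1 := E.hp1
  unfold rr
  split_ifs <;> linarith

lemma rate_nonneg (E : EastPlus) (ω : ConfigP) (x : PosNat) : 0 ≤ rate E.p ω x := by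
  unfold rate
  exact mul_nonneg (by split_ifs <;> norm_num) (rr_nonneg E _)

lemma rate_le_one (E : EastPlus) (ω : ConfigP) (x : PosNat) : rate E.p ω x ≤ 1 := by
  have := rr_nonneg E (ω x)
  have := rr_le_one E (ω x)
  unfold rate
  split_ifs <;> simp <;> assumption

lemma glue_flip (z : ℕ) (ω : Config) (η : ConfigP) (x : PosNat) (hx : x.1 < z) :
    glue z (flipAt ω x.1) η = flipAtP (glue z ω η) x := by
  funext y
  by_cases hy : y = x
  · subst hy; simp [glue, flipAtP, flipAt, hx]
  · have : (y.1 : ℤ) ≠ x.1 := by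
      intro h; exact hy (Subtype.ext (by exact_mod_cast h))
    simp [glue, flipAtP, flipAt, hy, this]

lemma flip_glue_ge (z : ℕ) (ω : Config) (η : ConfigP) (x : PosNat) (hx : z ≤ x.1) :
    flipAtP (glue z ω η) x = glue z ω (flipAtP η x) := by
  funext y
  by_cases hy : y = x
  · subst hy; simp [glue, flipAtP, Nat.not_lt.2 hx]
  · simp [glue, flipAtP, hy]

lemma dirichlet (E : EastPlus) (c φ : Config → ℝ) (x : ℤ) (hc : IsCylinder c)
    (hφ : IsCylinder φ) (hcx : ∀ ω b, c (Function.update ω x b) = c ω) :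
    ∫ ω, φ ω * (c ω * rr E.p (ω x) * (φ (flipAt ω x) - φ ω)) ∂E.μ =
      -(1 / 2) * ∫ ω, c ω * rr E.p (ω x) * (φ (flipAt ω x) - φ ω) ^ 2 ∂E.μ := by
  have := E.μprob
  have h1 : IsCylinder (fun ω => φ ω ^ 2) := by
    obtain ⟨S, hS⟩ := hφ
    exact ⟨S, fun ω ω' h => by beta_reduce; rw [hS ω ω' h]⟩
  have hst := stationary E c (fun ω => φ ω ^ 2) x hc h1 hcx
  have cc := isCyl_continuous c hc
  have cφ := isCyl_continuous φ hφ
  have cr : Continuous (fun ω : Config => rr E.p (ω x)) :=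
    (continuous_of_discreteTopology (f := rr E.p)).comp (continuous_apply x)
  have cf : Continuous (fun ω : Config => flipAt ω x) := by
    refine continuous_pi (fun y => ?_)
    by_cases hy : y = x
    · simp only [flipAt, hy, if_true]
      exact (continuous_of_discreteTopology (f := Bool.not)).comp (continuous_apply x)
    · simp only [flipAt, hy, if_false]
      exact continuous_apply y
  have cφf : Continuous (fun ω : Config => φ (flipAt ω x)) := cφ.comp cf
  have e1 : Integrable (fun ω => φ ω * (c ω * rr E.p (ω x) * (φ (flipAt ω x) - φ ω))) E.μ :=
    cont_integrable _ (by fun_prop) _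
  have e2 : Integrable (fun ω => c ω * rr E.p (ω x) * (φ (flipAt ω x) - φ ω) ^ 2) E.μ :=
    cont_integrable _ (by fun_prop) _
  have : ∫ ω, (φ ω * (c ω * rr E.p (ω x) * (φ (flipAt ω x) - φ ω))) +
    (1 / 2) * (c ω * rr E.p (ω x) * (φ (flipAt ω x) - φ ω) ^ 2) ∂E.μ = 0 := by
    rw [← mul_zero (1 / 2 : ℝ), ← hst, ← integral_const_mul]
    congr 1
    funext ω
    ring
  rw [integral_add e1 (e2.const_mul _), integral_const_mul] at this
  linarith

lemma glue_update_ne (z : ℕ) (ω : Config) (η : ConfigP) (x y : PosNat) (b : Bool) (h : y ≠ x) :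
    glue z (Function.update ω (x.1 : ℤ) b) η y = glue z ω η y := by
  have : (y.1 : ℤ) ≠ x.1 := by
    intro h'; exact h (Subtype.ext (by exact_mod_cast h'))
  simp [glue, this]

lemma succP_ne (x : PosNat) : succP x ≠ x := by
  intro h
  have := congrArg Subtype.val h
  simp [succP] at this

lemma MM_stationary (E : EastPlus) (z : ℕ) (ψ : ConfigP → ℝ) (η : ConfigP) (x : PosNat)
    (hx : x.1 < z) :
    MM E z (fun ω => rate E.p ω x * (ψ (flipAtP ω x) - ψ ω)) η = 0 := by
  have h := stationary E
    (fun ω => if glue z ω η (succP x) = false then (1 : ℝ) else 0)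
    (fun ω => ψ (glue z ω η)) x.1
    (glue_cyl z (fun ω => if ω (succP x) = false then (1 : ℝ) else 0) η)
    (glue_cyl z ψ η)
    (fun ω b => by rw [glue_update_ne _ _ _ _ _ _ (succP_ne x)])
  rw [← h]
  unfold MM
  congr 1
  funext ω
  rw [glue_flip z ω η x hx]
  simp only [rate]
  congr 2
  simp [glue, hx]

lemma MM_dirichlet (E : EastPlus) (z : ℕ) (ψ : ConfigP → ℝ) (η : ConfigP) (x : PosNat)
    (hx : x.1 < z) :
    MM E z (fun ω => ψ ω * (rate E.p ω x * (ψ (flipAtP ω x) - ψ ω))) η =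
    -(1 / 2) * MM E z (fun ω => rate E.p ω x * (ψ (flipAtP ω x) - ψ ω) ^ 2) η := by
  have h := MM_stationary E z (fun ω => ψ ω ^ 2) η x hx
  have : MM E z (fun ω => (ψ ω * (rate E.p ω x * (ψ (flipAtP ω x) - ψ ω))) +
    (1 / 2) * (rate E.p ω x * (ψ (flipAtP ω x) - ψ ω) ^ 2)) η = 0 := by
    rw [← mul_zero (1 / 2 : ℝ), ← h, ← MM_mul]
    congr 1
    funext ω
    ring
  rw [MM_add, MM_mul] at this
  linarith

lemma glue_succ (z : PosNat) (ω : Config) (η : ConfigP) (b : Bool) :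
    glue (z.1 + 1) (Function.update ω (z.1 : ℤ) b) η = glue z.1 ω (Function.update η z b) := by
  funext y
  by_cases hy : y = z
  · subst hy; simp [glue]
  · have h1 : (y.1 : ℤ) ≠ z.1 := by
      intro h; exact hy (Subtype.ext (by exact_mod_cast h))
    have h2 : y.1 ≠ z.1 := by exact_mod_cast h1
    have h3 : y.1 < z.1 + 1 ↔ y.1 < z.1 := by omega
    simp [glue, h3, hy, h1]

lemma MM_succ (E : EastPlus) (z : PosNat) (Φ : ConfigP → ℝ) (η : ConfigP) :
    MM E (z.1 + 1) Φ η = E.p * MM E z.1 Φ (Function.update η z true)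
      + (1 - E.p) * MM E z.1 Φ (Function.update η z false) := by
  unfold MM
  rw [resample E _ (glue_cyl _ Φ η) z.1]
  simp_rw [glue_succ]
  rw [integral_add ((glue_int E z.1 Φ _).const_mul _) ((glue_int E z.1 Φ _).const_mul _),
    integral_const_mul, integral_const_mul]

/-! ### The spectral gap inequality in finite volume with zero boundary condition -/

lemma gap_le (E : EastPlus) (hgap : 0 < gapZ E.p E.μ) (φ : Config → ℝ) (hφ : IsCylinder φ)
    (hv : 0 < variance φ E.μ) :
    gapZ E.p E.μ * variance φ E.μ ≤ -∫ ω, φ ω * eastGen E.p φ ω ∂E.μ := by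
  have hbdd : BddBelow {r | ∃ f : Config → ℝ, IsCylinder f ∧ 0 < variance f E.μ ∧
    r = (-∫ ω, f ω * eastGen E.p f ω ∂E.μ) / variance f E.μ} := by
    by_contra h
    rw [gapZ, Real.sInf_of_not_bddBelow h] at hgap
    exact lt_irrefl _ hgap
  have := csInf_le hbdd ⟨φ, hφ, hv, rfl⟩
  rw [le_div_iff₀ hv] at this
  exact this

lemma eastGen_glue (E : EastPlus) (z : PosNat) (v : ConfigP → ℝ) (η : ConfigP) (ω : Config) :
    eastGen E.p (fun ω => v (glue z.1 ω η)) ω = ∑ x ∈ sites (z.1 - 1),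
      (if ω ((x.1 : ℤ) + 1) = false then (1 : ℝ) else 0) * rr E.p (ω x.1) *
        (v (glue z.1 (flipAt ω x.1) η) - v (glue z.1 ω η)) := by
  have hz := z.2
  unfold eastGen
  rw [tsum_eq_sum (s := (sites (z.1 - 1)).image (fun x : PosNat => (x.1 : ℤ)))]
  · rw [Finset.sum_image]
    · rfl
    · intro a _ b _ h
      have h' : (a.1 : ℤ) = b.1 := h
      exact Subtype.ext (by exact_mod_cast h')
  · intro x hx
    have : glue z.1 (flipAt ω x) η = glue z.1 ω η := by
      funext y
      simp only [glue]
      split_ifs with hy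
      · have : (y.1 : ℤ) ≠ x := by
          intro h
          apply hx
          rw [Finset.mem_image]
          exact ⟨y, mem_sites.2 (by omega), h⟩
        simp [flipAt, this]
      · rfl
    beta_reduce
    rw [this]
    simp

lemma gap_ineq (E : EastPlus) (hgap : 0 < gapZ E.p E.μ) (z : PosNat) (v : ConfigP → ℝ)
    (η : ConfigP) (hη : η z = false) :
    gapZ E.p E.μ * (MM E z.1 (fun ω => v ω ^ 2) η - MM E z.1 v η ^ 2) ≤
      -∑ x ∈ sites (z.1 - 1),
        MM E z.1 (fun ω => v ω * (rate E.p ω x * (v (flipAtP ω x) - v ω))) η := by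
  have := E.μprob
  have hz := z.2
  set φ : Config → ℝ := fun ω => v (glue z.1 ω η) with hφdef
  have hφ : IsCylinder φ := glue_cyl _ _ _
  have cφ := isCyl_continuous φ hφ
  obtain ⟨C, hC⟩ := cont_bounded φ cφ
  have hm : MemLp φ 2 E.μ := MemLp.of_bound cφ.measurable.aestronglyMeasurable C
    (Eventually.of_forall hC)
  have hvar : variance φ E.μ = MM E z.1 (fun ω => v ω ^ 2) η - MM E z.1 v η ^ 2 := by
    rw [variance_eq_sub hm]; rfl
  rw [← hvar, ← Finset.sum_neg_distrib]
  have hD : ∀ x ∈ sites (z.1 - 1),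
      -MM E z.1 (fun ω => v ω * (rate E.p ω x * (v (flipAtP ω x) - v ω))) η =
      (1 / 2) * MM E z.1 (fun ω => rate E.p ω x * (v (flipAtP ω x) - v ω) ^ 2) η := by
    intro x hx
    rw [mem_sites] at hx
    rw [MM_dirichlet E z.1 v η x (by omega)]
    ring
  rw [Finset.sum_congr rfl hD]
  rcases (variance_nonneg φ E.μ).eq_or_lt with h0 | h0
  · rw [← h0, mul_zero]
    refine Finset.sum_nonneg (fun x _ => mul_nonneg (by norm_num) ?_)
    exact integral_nonneg (fun ω => mul_nonneg (rate_nonneg E _ _) (sq_nonneg _))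
  · refine (gap_le E hgap φ hφ h0).trans ?_
    simp_rw [hφdef, eastGen_glue, Finset.mul_sum]
    have hcyl : ∀ x : PosNat, IsCylinder
        (fun ω : Config => if ω ((x.1 : ℤ) + 1) = false then (1 : ℝ) else 0) := by
      intro x
      refine ⟨{(x.1 : ℤ) + 1}, fun ω ω' h => ?_⟩
      beta_reduce
      rw [h _ (by simp)]
    have hfc : ∀ x : ℤ, IsCylinder (fun ω => φ (flipAt ω x)) := by
      intro x
      obtain ⟨S, hS⟩ := hφ
      refine ⟨insert x S, fun ω ω' h => hS _ _ fun y hy => ?_⟩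
      simp only [flipAt]
      rw [h x (by simp), h y (by simp at hy ⊢; tauto)]
    have cr : ∀ x : ℤ, Continuous (fun ω : Config => rr E.p (ω x)) := fun x =>
      (continuous_of_discreteTopology (f := rr E.p)).comp (continuous_apply x)
    have hint : ∀ x : PosNat, Integrable (fun ω => φ ω *
        ((if ω ((x.1 : ℤ) + 1) = false then (1 : ℝ) else 0) * rr E.p (ω x.1) *
        (φ (flipAt ω x.1) - φ ω))) E.μ := by
      intro x
      have c1 := isCyl_continuous _ (hcyl x)
      have c2 := isCyl_continuous _ (hfc x.1)
      have c3 := cr x.1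
      refine cont_integrable _ ?_ _
      exact cφ.mul ((c1.mul c3).mul (c2.sub cφ))
    rw [integral_finsetSum _ (fun x _ => hint x), ← Finset.sum_neg_distrib]
    refine Finset.sum_le_sum (fun x hx => ?_)
    rw [mem_sites] at hx
    have hxz : x.1 < z.1 := by omega
    have := dirichlet E (fun ω : Config => if ω ((x.1 : ℤ) + 1) = false then (1 : ℝ) else 0)
      φ x.1 (hcyl x) hφ (fun ω b => by simp)
    rw [this]
    have hle : ∫ ω, (if ω ((x.1 : ℤ) + 1) = false then (1 : ℝ) else 0) * rr E.p (ω x.1) *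
        (φ (flipAt ω x.1) - φ ω) ^ 2 ∂E.μ ≤
        MM E z.1 (fun ω => rate E.p ω x * (v (flipAtP ω x) - v ω) ^ 2) η := by
      refine integral_mono ?_ (glue_int E z.1
        (fun ω => rate E.p ω x * (v (flipAtP ω x) - v ω) ^ 2) η) (fun ω => ?_)
      · have c1 := isCyl_continuous _ (hcyl x)
        have c2 := isCyl_continuous _ (hfc x.1)
        have c3 := cr x.1
        refine cont_integrable _ ?_ _
        exact ((c1.mul c3).mul ((c2.sub cφ).pow 2))
      · simp only [hφdef, rate]
        rw [glue_flip _ _ _ _ hxz]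
        have e1 : glue z.1 ω η x = ω x.1 := by simp [glue, hxz]
        rw [e1]
        refine mul_le_mul_of_nonneg_right (mul_le_mul_of_nonneg_right ?_ (rr_nonneg E _))
          (sq_nonneg _)
        by_cases hs : x.1 + 1 < z.1
        · have : glue z.1 ω η (succP x) = ω ((x.1 : ℤ) + 1) := by simp [glue, succP, hs]
          rw [this]
        · have hzx : succP x = z := Subtype.ext (by simp [succP]; omega)
          have : glue z.1 ω η (succP x) = false := by rw [hzx]; simp [glue, hη]
          rw [this, if_pos rfl]
          split_ifs <;> norm_num
    linarith

/-! ### The Euler scheme in finite volume with zero boundary condition -/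

def LL (p : ℝ) (n : ℕ) (v : ConfigP → ℝ) (ω : ConfigP) : ℝ :=
  ∑ x ∈ sites n, rate p ω x * (v (flipAtP ω x) - v ω)

def tau (n : ℕ) (ω : ConfigP) : ConfigP := fun x => if x.1 ≤ n then ω x else false

def KK (p ε : ℝ) (n : ℕ) (v : ConfigP → ℝ) (ω : ConfigP) : ℝ :=
  v (tau n ω) + ε * LL p n v (tau n ω)

def DepN (n : ℕ) (v : ConfigP → ℝ) : Prop :=
  ∀ ω ω' : ConfigP, (∀ x : PosNat, x.1 ≤ n → ω x = ω' x) → v ω = v ω'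

def Zn (n : ℕ) (η : ConfigP) : Prop := ∀ x : PosNat, n < x.1 → η x = false

lemma tau_Zn (n : ℕ) (ω : ConfigP) : Zn n (tau n ω) := by
  intro x hx
  simp [tau, Nat.not_le.2 hx]

lemma tau_of_Zn {n : ℕ} {ω : ConfigP} (h : Zn n ω) : tau n ω = ω := by
  funext x
  by_cases hx : x.1 ≤ n
  · simp [tau, hx]
  · simp [tau, hx, h x (by omega)]

lemma KK_dep (p ε : ℝ) (n : ℕ) (v : ConfigP → ℝ) : DepN n (KK p ε n v) := by
  intro ω ω' h
  have : tau n ω = tau n ω' := by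
    funext x
    by_cases hx : x.1 ≤ n
    · simp [tau, hx, h x hx]
    · simp [tau, hx]
  simp only [KK, this]

lemma KK_of_Zn (p ε : ℝ) {n : ℕ} (v : ConfigP → ℝ) {ω : ConfigP} (h : Zn n ω) :
    KK p ε n v ω = v ω + ε * LL p n v ω := by
  simp only [KK, tau_of_Zn h]

lemma Zn_flip {n : ℕ} {ω : ConfigP} (h : Zn n ω) (x : PosNat) (hx : x.1 ≤ n) :
    Zn n (flipAtP ω x) := by
  intro y hy
  have : y ≠ x := by rintro rfl; omega
  simp [flipAtP, this, h y hy]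

lemma Zn_glue {n z : ℕ} {η : ConfigP} (h : Zn n η) (hz : z ≤ n + 1) (ω : Config) :
    Zn n (glue z ω η) := by
  intro y hy
  have : ¬ y.1 < z := by omega
  simp [glue, this, h y hy]

structure Adm (n : ℕ) (z : PosNat) (η : ConfigP) : Prop where
  two : 2 ≤ z.1
  le : z.1 ≤ n + 1
  zn : Zn n η
  zero : η z = false

lemma MM_ge (E : EastPlus) (z : ℕ) (ψ : ConfigP → ℝ) (η : ConfigP) (x : PosNat) (hx : z ≤ x.1) :
    MM E z (fun ω => rate E.p ω x * (ψ (flipAtP ω x) - ψ ω)) η =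
      rate E.p η x * (MM E z ψ (flipAtP η x) - MM E z ψ η) := by
  have h1 : ¬ x.1 < z := by omega
  have h2 : ¬ x.1 + 1 < z := by omega
  have hr : ∀ ω, rate E.p (glue z ω η) x = rate E.p η x := by
    intro ω
    have a1 : glue z ω η x = η x := by simp [glue, h1]
    have a2 : glue z ω η (succP x) = η (succP x) := by simp [glue, succP, h2]
    simp only [rate, a1, a2]
  unfold MM
  rw [← integral_sub (glue_int E z ψ _) (glue_int E z ψ _), ← integral_const_mul]
  congr 1
  funext ω
  beta_reduce
  rw [hr, flip_glue_ge _ _ _ _ hx]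

lemma MM_jump (E : EastPlus) (n : ℕ) (z : PosNat) (ψ : ConfigP → ℝ) (η : ConfigP) (N : ℝ)
    (hA : Adm n z η) (hU : ∀ z' η', Adm n z' η' → MM E z'.1 ψ η' ≤ N)
    (x : PosNat) (hx : z.1 ≤ x.1) (hxn : x.1 ≤ n) :
    MM E z.1 (fun ω => rate E.p ω x * (ψ (flipAtP ω x) - ψ ω)) η ≤ N - MM E z.1 ψ η := by
  rw [MM_ge E z.1 ψ η x hx]
  have h0 : 0 ≤ N - MM E z.1 ψ η := by linarith [hU z η hA]
  by_cases hxz : x = z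
  · subst hxz
    by_cases hs : η (succP x) = false
    · have hf : flipAtP η x = Function.update η x true := by
        funext y
        by_cases hy : y = x
        · subst hy; simp [flipAtP, hA.zero]
        · simp [flipAtP, hy]
      have hu : Function.update η x false = η := by
        rw [← hA.zero]; exact Function.update_eq_self x η
      have h1 := MM_succ E x ψ η
      rw [hu] at h1
      have h2 := hU (succP x) η ⟨by have := hA.two; simp only [succP]; omega, by simpa [succP] using hxn, hA.zn, hs⟩
      simp only [succP] at h2
      have hr : rate E.p η x = E.p := by simp [rate, hs, hA.zero, rr]
      rw [hr, hf]
      linarith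
    · have hr : rate E.p η x = 0 := by simp [rate, hs]
      rw [hr, zero_mul]; exact h0
  · have hzx : z ≠ x := fun h => hxz h.symm
    have h2 := hU z (flipAtP η x) ⟨hA.two, hA.le, Zn_flip hA.zn x hxn, by
      simp [flipAtP, hzx, hA.zero]⟩
    have r0 := rate_nonneg E η x
    have r1 := rate_le_one E η x
    nlinarith

lemma mean_step (E : EastPlus) (ε : ℝ) (n : ℕ) (v : ConfigP → ℝ)
    (hM : ∀ z η, Adm n z η → MM E z.1 v η = 0) :
    ∀ z η, Adm n z η → MM E z.1 (KK E.p ε n v) η = 0 := by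
  intro z η hA
  rw [MM_congr E z.1 _ (fun ω => v ω + ε * LL E.p n v ω) η
    (fun ω => KK_of_Zn _ _ _ (Zn_glue hA.zn hA.le ω)), MM_add, MM_mul, hM z η hA]
  unfold LL
  rw [MM_sum, Finset.sum_eq_zero, mul_zero, add_zero]
  intro x hx
  rw [mem_sites] at hx
  by_cases hxz : x.1 < z.1
  · exact MM_stationary E z.1 v η x hxz
  · push Not at hxz
    have h1 := MM_jump E n z v η 0 hA (fun z' η' h => (hM z' η' h).le) x hxz hx
    have hneg : ∀ z' η', MM E z' (fun ω => -v ω) η' = - MM E z' v η' := by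
      intro z' η'
      have := MM_mul E z' (-1) v η'
      simpa using this
    have h2 := MM_jump E n z (fun ω => -v ω) η 0 hA
      (fun z' η' h => by rw [hneg, hM z' η' h, neg_zero]) x hxz hx
    rw [hM z η hA] at h1
    rw [hneg, hM z η hA] at h2
    have h3 : MM E z.1 (fun ω => rate E.p ω x * (-v (flipAtP ω x) - -v ω)) η =
      - MM E z.1 (fun ω => rate E.p ω x * (v (flipAtP ω x) - v ω)) η := by
      have := MM_mul E z.1 (-1) (fun ω => rate E.p ω x * (v (flipAtP ω x) - v ω)) η
      rw [neg_one_mul] at this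
      rw [← this]
      congr 1
      funext ω
      ring
    rw [h3] at h2
    linarith

lemma card_sites (n : ℕ) : (sites n).card ≤ n := by
  have := Finset.card_image_le (s := Finset.range n)
    (f := fun i => (⟨i + 1, Nat.succ_pos i⟩ : PosNat))
  simpa [sites] using this

lemma LL_bound (E : EastPlus) (n : ℕ) (v : ConfigP → ℝ) (b : ℝ) (hb : ∀ ω, |v ω| ≤ b)
    (ω : ConfigP) : |LL E.p n v ω| ≤ 2 * n * b := by
  have hb0 : 0 ≤ b := (abs_nonneg _).trans (hb ω)
  unfold LL
  refine (Finset.abs_sum_le_sum_abs _ _).trans ?_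
  have : ∀ x ∈ sites n, |rate E.p ω x * (v (flipAtP ω x) - v ω)| ≤ 2 * b := by
    intro x _
    rw [abs_mul, abs_of_nonneg (rate_nonneg E ω x)]
    have h1 := abs_sub (v (flipAtP ω x)) (v ω)
    have h2 := hb (flipAtP ω x)
    have h3 := hb ω
    have h4 := rate_nonneg E ω x
    have h5 := rate_le_one E ω x
    have h6 := abs_nonneg (v (flipAtP ω x) - v ω)
    nlinarith
  refine (Finset.sum_le_card_nsmul _ _ _ this).trans ?_
  rw [nsmul_eq_mul]
  have : ((sites n).card : ℝ) ≤ n := by exact_mod_cast card_sites n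
  nlinarith

lemma square_step (E : EastPlus) (hgap : 0 < gapZ E.p E.μ) (ε : ℝ) (hε : 0 ≤ ε) (n : ℕ)
    (hεn : ε * (2 * gapZ E.p E.μ + n) ≤ 1)
    (v : ConfigP → ℝ) (b N : ℝ) (hb : ∀ ω, |v ω| ≤ b)
    (hM : ∀ z η, Adm n z η → MM E z.1 v η = 0)
    (hN : ∀ z η, Adm n z η → MM E z.1 (fun ω => v ω ^ 2) η ≤ N) :
    ∀ z η, Adm n z η → MM E z.1 (fun ω => KK E.p ε n v ω ^ 2) η ≤
      (1 - 2 * ε * gapZ E.p E.μ) * N + ε ^ 2 * (2 * n * b) ^ 2 := by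
  intro z η hA
  set γ := gapZ E.p E.μ with hγ
  set D := MM E z.1 (fun ω => v ω ^ 2) η with hD
  have hDN : D ≤ N := hN z η hA
  have hg := gap_ineq E hgap z v η hA.zero
  rw [hM z η hA] at hg
  have e1 : MM E z.1 (fun ω => KK E.p ε n v ω ^ 2) η = D + 2 * ε *
      (∑ x ∈ sites n, MM E z.1 (fun ω => v ω * (rate E.p ω x * (v (flipAtP ω x) - v ω))) η)
      + ε ^ 2 * MM E z.1 (fun ω => LL E.p n v ω ^ 2) η := by
    rw [hD, ← MM_sum, ← MM_mul, ← MM_mul, ← MM_add, ← MM_add]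
    refine MM_congr E z.1 _ _ η (fun ω => ?_)
    rw [KK_of_Zn _ _ _ (Zn_glue hA.zn hA.le ω), ← Finset.mul_sum]
    unfold LL
    ring
  have e2 : MM E z.1 (fun ω => LL E.p n v ω ^ 2) η ≤ (2 * n * b) ^ 2 := by
    rw [← MM_const E z.1 ((2 * n * b) ^ 2) η]
    refine MM_mono E z.1 _ _ η (fun ω => ?_)
    exact sq_le_sq' (neg_le_of_abs_le (LL_bound E n v b hb _))
      (le_of_abs_le (LL_bound E n v b hb _))
  have hz2 := hA.two
  have hzn := hA.le
  have e3 : (sites n).filter (fun x => x.1 < z.1) = sites (z.1 - 1) := by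
    ext x
    rw [Finset.mem_filter, mem_sites, mem_sites]
    omega
  have e4 : ∀ x ∈ (sites n).filter (fun x => ¬ x.1 < z.1),
      2 * MM E z.1 (fun ω => v ω * (rate E.p ω x * (v (flipAtP ω x) - v ω))) η ≤ N - D := by
    intro x hx
    rw [Finset.mem_filter, mem_sites] at hx
    refine le_trans ?_ (MM_jump E n z (fun ω => v ω ^ 2) η N hA hN x (by omega) hx.1)
    rw [← MM_mul]
    refine MM_mono E z.1 _ _ η (fun ω => ?_)
    have := mul_nonneg (rate_nonneg E (glue z.1 ω η) x)
      (sq_nonneg (v (flipAtP (glue z.1 ω η) x) - v (glue z.1 ω η)))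
    nlinarith
  have e5 := Finset.sum_le_card_nsmul _ _ _ e4
  rw [nsmul_eq_mul] at e5
  have e6 : (((sites n).filter (fun x => ¬ x.1 < z.1)).card : ℝ) ≤ n := by
    exact_mod_cast (Finset.card_filter_le _ _).trans (card_sites n)
  have e7 : (((sites n).filter (fun x => ¬ x.1 < z.1)).card : ℝ) * (N - D) ≤ n * (N - D) :=
    mul_le_mul_of_nonneg_right e6 (by linarith)
  rw [e1, ← Finset.sum_filter_add_sum_filter_not (sites n) (fun x => x.1 < z.1), e3]
  rw [← Finset.mul_sum] at e5
  set S1 := ∑ x ∈ sites (z.1 - 1), MM E z.1 (fun ω => v ω * (rate E.p ω x * (v (flipAtP ω x) - v ω))) η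
  set S2 := ∑ x ∈ sites n with ¬ x.1 < z.1, MM E z.1 (fun ω => v ω * (rate E.p ω x * (v (flipAtP ω x) - v ω))) η
  have f1 : ε * (2 * S2) ≤ ε * (n * (N - D)) := mul_le_mul_of_nonneg_left (e5.trans e7) hε
  have f2 : ε * (γ * D) ≤ ε * (-S1) := mul_le_mul_of_nonneg_left (by simpa using hg) hε
  have f3 : ε ^ 2 * MM E z.1 (fun ω => LL E.p n v ω ^ 2) η ≤ ε ^ 2 * (2 * n * b) ^ 2 :=
    mul_le_mul_of_nonneg_left e2 (sq_nonneg _)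
  have f4 : 0 ≤ (1 - ε * (2 * γ + n)) * (N - D) := mul_nonneg (by linarith) (by linarith)
  nlinarith

lemma avg_bound {ι : Type*} (s : Finset ι) (r g : ι → ℝ) (g0 ε δ : ℝ) (hε : 0 ≤ ε)
    (hs : ε * s.card ≤ 1) (hr0 : ∀ i ∈ s, 0 ≤ r i) (hr1 : ∀ i ∈ s, r i ≤ 1)
    (hg : ∀ i ∈ s, |g i| ≤ δ) (hg0 : |g0| ≤ δ) :
    |g0 + ε * ∑ i ∈ s, r i * (g i - g0)| ≤ δ := by
  have e : g0 + ε * ∑ i ∈ s, r i * (g i - g0) =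
      (1 - ε * ∑ i ∈ s, r i) * g0 + ε * ∑ i ∈ s, r i * g i := by
    simp_rw [mul_sub, Finset.sum_sub_distrib, ← Finset.sum_mul]
    ring
  have h1 : ∑ i ∈ s, r i ≤ s.card := by
    simpa using Finset.sum_le_card_nsmul s r 1 hr1
  have h2 : ε * ∑ i ∈ s, r i ≤ 1 := (mul_le_mul_of_nonneg_left h1 hε).trans hs
  have h3 : |∑ i ∈ s, r i * g i| ≤ (∑ i ∈ s, r i) * δ := by
    refine (Finset.abs_sum_le_sum_abs _ _).trans ?_
    rw [Finset.sum_mul]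
    refine Finset.sum_le_sum (fun i hi => ?_)
    rw [abs_mul, abs_of_nonneg (hr0 i hi)]
    exact mul_le_mul_of_nonneg_left (hg i hi) (hr0 i hi)
  rw [e]
  refine (abs_add_le _ _).trans ?_
  rw [abs_mul, abs_mul, abs_of_nonneg (by linarith : 0 ≤ 1 - ε * ∑ i ∈ s, r i), abs_of_nonneg hε]
  have := mul_le_mul_of_nonneg_left hg0 (by linarith : 0 ≤ 1 - ε * ∑ i ∈ s, r i)
  have := mul_le_mul_of_nonneg_left h3 hε
  nlinarith

lemma sup_step (E : EastPlus) (ε : ℝ) (hε : 0 ≤ ε) (n : ℕ) (hεn : ε * n ≤ 1)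
    (v : ConfigP → ℝ) (b : ℝ) (hb : ∀ ω, |v ω| ≤ b) (ω : ConfigP) :
    |KK E.p ε n v ω| ≤ b := by
  unfold KK LL
  refine avg_bound _ _ _ _ _ _ hε ?_ (fun i _ => rate_nonneg E _ i) (fun i _ => rate_le_one E _ i)
    (fun i _ => hb _) (hb _)
  have : ((sites n).card : ℝ) ≤ n := by exact_mod_cast card_sites n
  exact (mul_le_mul_of_nonneg_left this hε).trans hεn

lemma flip_comm (ω : ConfigP) (x y : PosNat) (h : y ≠ x) :
    flipAtP (flipAtP ω x) y = flipAtP (flipAtP ω y) x := by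
  funext w
  by_cases h1 : w = x
  · subst h1
    simp [flipAtP, h.symm]
  · by_cases h2 : w = y
    · subst h2; simp [flipAtP, h]
    · simp [flipAtP, h1, h2]

lemma grad_step (E : EastPlus) (ε : ℝ) (hε : 0 ≤ ε) (n : ℕ) (hεn : ε * n ≤ 1)
    (v : ConfigP → ℝ) (C : ℝ) (hC : 0 ≤ C)
    (hv : ∀ x ∈ sites n, ∀ ω, Zn n ω → |v (flipAtP ω x) - v ω| ≤ C * (1 / 2) ^ x.1) :
    ∀ x ∈ sites n, ∀ ω, Zn n ω → |KK E.p ε n v (flipAtP ω x) - KK E.p ε n v ω| ≤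
      (C * (1 + 6 * ε)) * (1 / 2) ^ x.1 := by
  classical
  intro x hx ω hω
  have hxn := mem_sites.1 hx
  rw [KK_of_Zn _ _ _ (Zn_flip hω x hxn), KK_of_Zn _ _ _ hω]
  set g : ConfigP → ℝ := fun ω => v (flipAtP ω x) - v ω with hg
  set r' : PosNat → ℝ := fun y => if y = x ∨ succP y = x then 0 else rate E.p ω y with hr'
  set bb : PosNat → ℝ := fun y => rate E.p (flipAtP ω x) y *
    (v (flipAtP (flipAtP ω x) y) - v (flipAtP ω x)) - rate E.p ω y * (v (flipAtP ω y) - v ω)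
    - r' y * (g (flipAtP ω y) - g ω) with hbb
  set Gx := C * (1 / 2 : ℝ) ^ x.1 with hGx
  have hGx0 : 0 ≤ Gx := by positivity
  have e : (v (flipAtP ω x) + ε * LL E.p n v (flipAtP ω x)) - (v ω + ε * LL E.p n v ω) =
      (g ω + ε * ∑ y ∈ sites n, r' y * (g (flipAtP ω y) - g ω)) + ε * ∑ y ∈ sites n, bb y := by
    simp only [LL, hbb, hg, Finset.sum_sub_distrib]
    ring
  have hcard : ((sites n).card : ℝ) ≤ n := by exact_mod_cast card_sites n
  have h1 : |g ω + ε * ∑ y ∈ sites n, r' y * (g (flipAtP ω y) - g ω)| ≤ Gx := by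
    refine avg_bound _ _ _ _ _ _ hε ((mul_le_mul_of_nonneg_left hcard hε).trans hεn) ?_ ?_ ?_ ?_
    · intro y _
      simp only [hr']
      split_ifs
      · exact le_rfl
      · exact rate_nonneg E _ _
    · intro y _
      simp only [hr']
      split_ifs
      · norm_num
      · exact rate_le_one E _ _
    · intro y hy
      exact hv x hx _ (Zn_flip hω y (mem_sites.1 hy))
    · exact hv x hx _ hω
  have h2 : ∀ y ∈ sites n, |bb y| ≤ (if y = x then 2 * Gx else 0) +
      (if succP y = x then 4 * Gx else 0) := by
    intro y hy
    have gen : ∀ G : ℝ, |v (flipAtP (flipAtP ω x) y) - v (flipAtP ω x)| ≤ G →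
        |v (flipAtP ω y) - v ω| ≤ G → |rate E.p (flipAtP ω x) y *
        (v (flipAtP (flipAtP ω x) y) - v (flipAtP ω x)) - rate E.p ω y * (v (flipAtP ω y) - v ω)|
        ≤ 2 * G := by
      intro G k1 k2
      refine (abs_sub _ _).trans ?_
      rw [abs_mul, abs_mul, abs_of_nonneg (rate_nonneg E _ _), abs_of_nonneg (rate_nonneg E _ _)]
      have a1 := rate_le_one E ω y
      have a2 := rate_nonneg E ω y
      have a3 := rate_le_one E (flipAtP ω x) y
      have a4 := rate_nonneg E (flipAtP ω x) y
      have a5 := abs_nonneg (v (flipAtP (flipAtP ω x) y) - v (flipAtP ω x))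
      have a6 := abs_nonneg (v (flipAtP ω y) - v ω)
      nlinarith
    by_cases hyx : y = x
    · have : bb y = rate E.p (flipAtP ω x) y *
        (v (flipAtP (flipAtP ω x) y) - v (flipAtP ω x)) - rate E.p ω y * (v (flipAtP ω y) - v ω) := by
        simp [hbb, hr', hyx]
      rw [this, if_pos hyx]
      have k := gen Gx (by rw [hyx]; exact hv x hx _ (Zn_flip hω x hxn))
        (by rw [hyx]; exact hv x hx _ hω)
      split_ifs <;> linarith
    · by_cases hsy : succP y = x
      · have : bb y = rate E.p (flipAtP ω x) y *
          (v (flipAtP (flipAtP ω x) y) - v (flipAtP ω x)) - rate E.p ω y * (v (flipAtP ω y) - v ω) := by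
          simp [hbb, hr', hsy]
        rw [this, if_pos hsy, if_neg hyx]
        have hp : C * (1 / 2 : ℝ) ^ y.1 = 2 * Gx := by
          rw [hGx, ← hsy]
          simp only [succP]
          rw [pow_succ]; ring
        have k := gen (2 * Gx) (by rw [← hp]; exact hv y hy _ (Zn_flip hω x hxn))
          (by rw [← hp]; exact hv y hy _ hω)
        linarith
      · have hr : rate E.p (flipAtP ω x) y = rate E.p ω y := by
          simp [rate, flipAtP, hyx, hsy]
        have : bb y = 0 := by
          simp only [hbb, hr', hg, hyx, hsy, or_self, if_false, hr]
          rw [flip_comm ω x y hyx]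
          ring
        rw [this, if_neg hyx, if_neg hsy]
        simp
  have h3 : |∑ y ∈ sites n, bb y| ≤ 6 * Gx := by
    refine (Finset.abs_sum_le_sum_abs _ _).trans ((Finset.sum_le_sum h2).trans ?_)
    rw [Finset.sum_add_distrib, ← Finset.sum_filter, ← Finset.sum_filter, Finset.sum_const,
      Finset.sum_const, nsmul_eq_mul, nsmul_eq_mul]
    have c1 : ((Finset.filter (fun y => y = x) (sites n)).card : ℝ) ≤ 1 := by
      have : (Finset.filter (fun y => y = x) (sites n)).card ≤ 1 := by
        rw [Finset.card_le_one]
        intro a ha b hb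
        rw [(Finset.mem_filter.1 ha).2, (Finset.mem_filter.1 hb).2]
      exact_mod_cast this
    have c2 : ((Finset.filter (fun y => succP y = x) (sites n)).card : ℝ) ≤ 1 := by
      have : (Finset.filter (fun y => succP y = x) (sites n)).card ≤ 1 := by
        rw [Finset.card_le_one]
        intro a ha b hb
        have := (Finset.mem_filter.1 ha).2.trans (Finset.mem_filter.1 hb).2.symm
        have := congrArg Subtype.val this
        simp only [succP, add_left_inj] at this
        exact Subtype.ext this
      exact_mod_cast this
    nlinarith
  rw [e]
  refine (abs_add_le _ _).trans ?_
  rw [abs_mul, abs_of_nonneg hε]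
  have := mul_le_mul_of_nonneg_left h3 hε
  calc _ ≤ Gx + ε * (6 * Gx) := add_le_add h1 this
    _ = _ := by rw [hGx]; ring

/-! ### The semigroup -/

def PP (E : EastPlus) (t : ℝ) (v : ConfigP → ℝ) (ω : ConfigP) : ℝ := ∫ η, v η ∂(E.Pp t ω)

lemma PP_int (E : EastPlus) (t : ℝ) (v : ConfigP → ℝ) (hv : Continuous v) (ω : ConfigP) :
    Integrable v (E.Pp t ω) := by
  have := E.markov t
  exact cont_integrable v hv _

lemma PP_zero (E : EastPlus) (v : ConfigP → ℝ) (hv : Continuous v) (ω : ConfigP) :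
    PP E 0 v ω = v ω := by
  unfold PP
  rw [E.P0, Kernel.id_apply, integral_dirac]

lemma PP_semigroup (E : EastPlus) (s t : ℝ) (hs : 0 ≤ s) (ht : 0 ≤ t) (v : ConfigP → ℝ)
    (hv : Continuous v) (ω : ConfigP) : PP E (t + s) v ω = PP E t (PP E s v) ω := by
  have := E.markov (t + s)
  have := E.markov s
  have := E.markov t
  unfold PP
  have hi := PP_int E (t + s) v hv ω
  rw [E.semigroup s t hs ht] at hi ⊢
  exact Kernel.integral_comp hi

lemma PP_abs_le (E : EastPlus) (t : ℝ) (v : ConfigP → ℝ) (C : ℝ) (hC : ∀ ω, |v ω| ≤ C)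
    (ω : ConfigP) : |PP E t v ω| ≤ C := by
  have := E.markov t
  unfold PP
  have := norm_integral_le_of_norm_le_const (μ := E.Pp t ω) (f := v) (C := C)
    (Eventually.of_forall hC)
  simpa using this

lemma PP_sub (E : EastPlus) (t : ℝ) (v w : ConfigP → ℝ) (hv : Continuous v) (hw : Continuous w)
    (ω : ConfigP) : PP E t (fun ω => v ω - w ω) ω = PP E t v ω - PP E t w ω :=
  integral_sub (PP_int E t v hv ω) (PP_int E t w hw ω)

def uR (E : EastPlus) (g : ConfigP → ℝ) (ω : ConfigP) : ℝ :=
  ∫ s in Set.Ioi (0 : ℝ), Real.exp (-s) * PP E s g ω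

lemma uR_F_int (E : EastPlus) (g : ConfigP → ℝ) (hg : Continuous g) (ω : ConfigP) (a : ℝ) :
    IntegrableOn (fun s => Real.exp (-s) * PP E s g ω) (Set.Ioi a) := by
  obtain ⟨C, hC⟩ := cont_bounded g hg
  have hc : Continuous (fun s => Real.exp (-s) * PP E s g ω) :=
    (Real.continuous_exp.comp continuous_neg).mul (E.timeCont g hg ω)
  refine Integrable.mono' ((integrableOn_exp_neg_Ioi a).mul_const C)
    hc.aestronglyMeasurable (Eventually.of_forall fun s => ?_)
  rw [Real.norm_eq_abs, abs_mul, abs_of_pos (Real.exp_pos _)]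
  exact mul_le_mul_of_nonneg_left (PP_abs_le E s g C hC ω) (Real.exp_pos _).le

lemma uR_continuous (E : EastPlus) (g : ConfigP → ℝ) (hg : Continuous g) :
    Continuous (uR E g) := by
  obtain ⟨C, hC⟩ := cont_bounded g hg
  unfold uR
  refine continuous_of_dominated (bound := fun s => Real.exp (-s) * C)
    (fun ω => (uR_F_int E g hg ω 0).aestronglyMeasurable) (fun ω => Eventually.of_forall fun s => ?_)
    ((integrableOn_exp_neg_Ioi 0).mul_const C) ?_
  · rw [Real.norm_eq_abs, abs_mul, abs_of_pos (Real.exp_pos _)]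
    exact mul_le_mul_of_nonneg_left (PP_abs_le E s g C hC ω) (Real.exp_pos _).le
  · filter_upwards [ae_restrict_mem measurableSet_Ioi] with s hs
    exact continuous_const.mul (E.feller s (le_of_lt hs) g hg)

lemma PP_uR (E : EastPlus) (g : ConfigP → ℝ) (hg : Continuous g) (ω : ConfigP) (h : ℝ)
    (hh : 0 ≤ h) :
    PP E h (uR E g) ω = Real.exp h * (uR E g ω - ∫ s in (0 : ℝ)..h, Real.exp (-s) * PP E s g ω) := by
  have := E.markov h
  obtain ⟨C, hC⟩ := cont_bounded g hg
  have hsm : StronglyMeasurable (Function.uncurry (fun (s : ℝ) (η : ConfigP) =>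
      Real.exp (-s) * PP E s g η)) := by
    refine stronglyMeasurable_uncurry_of_continuous_of_stronglyMeasurable (fun η => ?_) (fun s => ?_)
    · exact (Real.continuous_exp.comp continuous_neg).mul (E.timeCont g hg η)
    · have := E.markov s
      exact (StronglyMeasurable.integral_kernel hg.measurable.stronglyMeasurable).const_mul _
  have hint : Integrable (Function.uncurry (fun (s : ℝ) (η : ConfigP) =>
      Real.exp (-s) * PP E s g η)) ((volume.restrict (Set.Ioi (0 : ℝ))).prod (E.Pp h ω)) := by
    refine Integrable.mono' (Integrable.mul_prod (integrableOn_exp_neg_Ioi 0)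
      (integrable_const C)) hsm.aestronglyMeasurable (Eventually.of_forall fun q => ?_)
    simp only [Function.uncurry]
    rw [Real.norm_eq_abs, abs_mul, abs_of_pos (Real.exp_pos _)]
    exact mul_le_mul_of_nonneg_left (PP_abs_le E q.1 g C hC q.2) (Real.exp_pos _).le
  have e1 : PP E h (uR E g) ω =
      ∫ s in Set.Ioi (0 : ℝ), Real.exp h * (Real.exp (-(s + h)) * PP E (s + h) g ω) := by
    change ∫ η, (∫ s in Set.Ioi (0 : ℝ), Real.exp (-s) * PP E s g η) ∂(E.Pp h ω) = _
    rw [← integral_integral_swap hint]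
    refine setIntegral_congr_fun measurableSet_Ioi (fun s hs => ?_)
    beta_reduce
    rw [integral_const_mul, add_comm s h, PP_semigroup E s h (le_of_lt hs) hh g hg, ← mul_assoc,
      ← Real.exp_add]
    congr 2
    ring
  have e2 : ∫ s in Set.Ioi (0 : ℝ), (Real.exp (-(s + h)) * PP E (s + h) g ω) =
      ∫ s in Set.Ioi h, Real.exp (-s) * PP E s g ω := by
    have := (measurePreserving_add_right volume h).setIntegral_preimage_emb
      (measurableEmbedding_addRight h) (fun s => Real.exp (-s) * PP E s g ω) (Set.Ioi h)
    rw [← this]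
    congr 2
    ext y
    simp
  rw [e1, integral_const_mul, e2]
  congr 1
  have := intervalIntegral.integral_interval_add_Ioi (uR_F_int E g hg ω 0) (uR_F_int E g hg ω h)
  unfold uR
  linarith

lemma hasDeriv_aux (E : EastPlus) (g : ConfigP → ℝ) (hg : Continuous g) (ω : ConfigP) (a h : ℝ) :
    HasDerivAt (fun h => Real.exp h * (a - ∫ s in (0 : ℝ)..h, Real.exp (-s) * PP E s g ω))
      (Real.exp h * (a - ∫ s in (0 : ℝ)..h, Real.exp (-s) * PP E s g ω) - PP E h g ω) h := by
  have hc : Continuous (fun s => Real.exp (-s) * PP E s g ω) :=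
    (Real.continuous_exp.comp continuous_neg).mul (E.timeCont g hg ω)
  have h1 := intervalIntegral.integral_hasDerivAt_right (hc.intervalIntegrable 0 h)
    hc.aestronglyMeasurable.stronglyMeasurableAtFilter hc.continuousAt
  have h2 : HasDerivAt (fun h => Real.exp h * (a - ∫ s in (0 : ℝ)..h, Real.exp (-s) * PP E s g ω))
      (Real.exp h * (a - ∫ s in (0 : ℝ)..h, Real.exp (-s) * PP E s g ω) +
        Real.exp h * (-(Real.exp (-h) * PP E h g ω))) h :=
    (Real.hasDerivAt_exp h).mul (h1.const_sub a)
  have h3 : Real.exp h * Real.exp (-h) = 1 := by rw [← Real.exp_add]; simp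
  have h4 : Real.exp h * (a - ∫ s in (0 : ℝ)..h, Real.exp (-s) * PP E s g ω) - PP E h g ω =
      Real.exp h * (a - ∫ s in (0 : ℝ)..h, Real.exp (-s) * PP E s g ω) +
        Real.exp h * (-(Real.exp (-h) * PP E h g ω)) := by
    linear_combination (PP E h g ω) * h3
  rw [h4]
  exact h2

lemma right_deriv_nonpos (φ : ℝ → ℝ) (d : ℝ) (hd : HasDerivWithinAt φ d (Set.Ici 0) 0)
    (h : ∀ s, 0 ≤ s → φ s ≤ φ 0) : d ≤ 0 := by
  have h1 := hd.Ioi_of_Ici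
  rw [hasDerivWithinAt_iff_tendsto_slope' (by simp)] at h1
  refine le_of_tendsto h1 ?_
  filter_upwards [self_mem_nhdsWithin] with s hs
  have hs' : 0 < s := hs
  rw [slope_def_field]
  exact div_nonpos_of_nonpos_of_nonneg (by linarith [h s hs'.le]) (by linarith)

lemma uR_le (E : EastPlus) (v Lv : ConfigP → ℝ) (hv : Continuous v) (hLv : Continuous Lv)
    (hgen : ∀ ω, HasDerivWithinAt (fun u => PP E u v ω) (Lv ω) (Set.Ici 0) 0) (ω : ConfigP) :
    uR E (fun ω => v ω - Lv ω) ω ≤ v ω := by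
  set g : ConfigP → ℝ := fun ω => v ω - Lv ω with hgdef
  have hg : Continuous g := hv.sub hLv
  have hu := uR_continuous E g hg
  have hw : Continuous (fun ω => uR E g ω - v ω) := hu.sub hv
  obtain ⟨ω0, -, hmax⟩ := isCompact_univ.exists_isMaxOn Set.univ_nonempty hw.continuousOn
  have hmax' : ∀ η, uR E g η - v η ≤ uR E g ω0 - v ω0 := fun η => hmax (Set.mem_univ η)
  have hd : HasDerivWithinAt (fun h => PP E h (fun ω => uR E g ω - v ω) ω0)
      (uR E g ω0 - v ω0) (Set.Ici 0) 0 := by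
    have h1 := (hasDeriv_aux E g hg ω0 (uR E g ω0) 0).hasDerivWithinAt (s := Set.Ici 0)
    have h2 := h1.sub (hgen ω0)
    have h3 : Real.exp 0 * (uR E g ω0 - ∫ s in (0 : ℝ)..0, Real.exp (-s) * PP E s g ω0)
        - PP E 0 g ω0 - Lv ω0 = uR E g ω0 - v ω0 := by
      rw [PP_zero E g hg]
      simp [hgdef]
      ring
    rw [h3] at h2
    refine h2.congr (fun s hs => ?_) ?_
    · rw [PP_sub E s _ _ hu hv, PP_uR E g hg ω0 s hs]; rfl
    · rw [PP_sub E 0 _ _ hu hv, PP_uR E g hg ω0 0 le_rfl]; rfl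
  have hle := right_deriv_nonpos _ _ hd (fun s hs => by
    rw [PP_zero E _ hw]
    have := E.markov s
    unfold PP
    calc _ ≤ ∫ η, (uR E g ω0 - v ω0) ∂(E.Pp s ω0) :=
          integral_mono (PP_int E s _ hw ω0) (integrable_const _) hmax'
      _ = _ := by simp)
  linarith [hmax' ω]

lemma PP_deriv (E : EastPlus) (v Lv : ConfigP → ℝ) (hv : Continuous v) (hLv : Continuous Lv)
    (hgen : ∀ ω, HasDerivWithinAt (fun u => PP E u v ω) (Lv ω) (Set.Ici 0) 0) (ω : ConfigP)
    (t : ℝ) (ht : 0 ≤ t) :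
    HasDerivWithinAt (fun u => PP E u v ω) (PP E t Lv ω) (Set.Ici t) t := by
  set g : ConfigP → ℝ := fun ω => v ω - Lv ω with hgdef
  have hg : Continuous g := hv.sub hLv
  have hneg : ∀ s (w : ConfigP → ℝ) η, PP E s (fun ω => -w ω) η = - PP E s w η :=
    fun s w η => integral_neg _
  have hu : ∀ η, uR E g η = v η := by
    intro η
    refine le_antisymm (uR_le E v Lv hv hLv hgen η) ?_
    have := uR_le E (fun ω => -v ω) (fun ω => -Lv ω) hv.neg hLv.neg (fun ω => by
      simp_rw [hneg]; exact (hgen ω).neg) η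
    have e : uR E (fun ω => -v ω - -Lv ω) η = - uR E g η := by
      unfold uR
      rw [← integral_neg]
      congr 1
      funext s
      rw [← mul_neg, ← hneg]
      congr 2
      funext ω
      simp [hgdef]
      ring
    linarith
  have hu' : uR E g = v := funext hu
  have key : ∀ s, 0 ≤ s → PP E s v ω =
      Real.exp s * (v ω - ∫ r in (0 : ℝ)..s, Real.exp (-r) * PP E r g ω) := by
    intro s hs
    have := PP_uR E g hg ω s hs
    rwa [hu'] at this
  have h1 := (hasDeriv_aux E g hg ω (v ω) t).hasDerivWithinAt (s := Set.Ici t)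
  rw [← key t ht, hgdef, PP_sub E t _ _ hv hLv, sub_sub_cancel] at h1
  exact h1.congr (fun s hs => key s (ht.trans hs)) (key t ht)

lemma depN_isCyl {n : ℕ} {v : ConfigP → ℝ} (h : DepN n v) : IsCylinderP v :=
  ⟨sites n, fun ω ω' hω => h ω ω' (fun x hx => hω x (mem_sites.2 hx))⟩

lemma depN_cont {n : ℕ} {v : ConfigP → ℝ} (h : DepN n v) : Continuous v :=
  cyl_continuous v (sites n) (fun ω ω' hω => h ω ω' (fun x hx => hω x (mem_sites.2 hx)))

lemma eastGenP_eq (p : ℝ) {n : ℕ} {v : ConfigP → ℝ} (h : DepN n v) (ω : ConfigP) :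
    eastGenP p v ω = LL p n v ω := by
  unfold eastGenP LL
  rw [tsum_eq_sum (s := sites n)]
  · rfl
  · intro x hx
    rw [mem_sites] at hx
    have : v (flipAtP ω x) = v ω := by
      apply h
      intro y hy
      have : y ≠ x := by rintro rfl; exact hx hy
      simp [flipAtP, this]
    rw [this]
    simp

lemma LL_dep (p : ℝ) {n : ℕ} {v : ConfigP → ℝ} (h : DepN n v) : DepN (n + 1) (LL p n v) := by
  intro ω ω' hω
  unfold LL
  refine Finset.sum_congr rfl (fun x hx => ?_)
  rw [mem_sites] at hx
  have e1 : ω x = ω' x := hω x (by omega)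
  have e2 : ω (succP x) = ω' (succP x) := hω _ (by simp [succP]; omega)
  have e3 : v ω = v ω' := h _ _ (fun y hy => hω y (by omega))
  have e4 : v (flipAtP ω x) = v (flipAtP ω' x) := by
    apply h
    intro y hy
    simp only [flipAtP]
    rw [e1, hω y (by omega)]
  simp only [rate, e1, e2, e3, e4]

lemma PP_deriv_cyl (E : EastPlus) {n : ℕ} {v : ConfigP → ℝ} (h : DepN n v) (ω : ConfigP)
    (t : ℝ) (ht : 0 ≤ t) :
    HasDerivWithinAt (fun u => PP E u v ω) (PP E t (LL E.p n v) ω) (Set.Ici t) t := by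
  refine PP_deriv E v _ (depN_cont h) (depN_cont (LL_dep E.p h)) (fun η => ?_) ω t ht
  rw [← eastGenP_eq E.p h]
  exact E.generator v (depN_isCyl h) η

lemma PP_first (E : EastPlus) {n : ℕ} {v : ConfigP → ℝ} (h : DepN n v) (b : ℝ)
    (hb : ∀ ω, |LL E.p n v ω| ≤ b) (ω : ConfigP) (t : ℝ) (ht : 0 ≤ t) :
    |PP E t v ω - v ω| ≤ b * t := by
  have := norm_image_sub_le_of_norm_deriv_right_le_segment (f := fun u => PP E u v ω)
    (a := 0) (b := t) (C := b) (E.timeCont v (depN_cont h) ω).continuousOn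
    (fun x hx => PP_deriv_cyl E h ω x hx.1) (fun x _ => PP_abs_le E x _ b hb ω) t ⟨ht, le_rfl⟩
  simpa [PP_zero E v (depN_cont h)] using this

lemma PP_second (E : EastPlus) {n : ℕ} {v : ConfigP → ℝ} (h : DepN n v) (b : ℝ)
    (hb : ∀ ω, |v ω| ≤ b) (ω : ConfigP) (t : ℝ) (ht : 0 ≤ t) :
    |PP E t v ω - v ω - t * LL E.p n v ω| ≤ (2 * (n + 1) * (2 * n * b)) * t ^ 2 := by
  have hL := LL_bound E n v b hb
  have hLL := LL_bound E (n + 1) (LL E.p n v) _ hL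
  have hb0 : 0 ≤ b := (abs_nonneg _).trans (hb ω)
  have h1 := PP_first E (LL_dep E.p h) _ hLL ω
  push_cast at h1
  have := norm_image_sub_le_of_norm_deriv_right_le_segment
    (f := fun u => PP E u v ω - u * LL E.p n v ω)
    (f' := fun u => PP E u (LL E.p n v) ω - 1 * LL E.p n v ω)
    (a := 0) (b := t) (C := (2 * (n + 1) * (2 * n * b)) * t)
    ((E.timeCont v (depN_cont h) ω).sub (continuous_id.mul continuous_const)).continuousOn
    (fun x hx => (PP_deriv_cyl E h ω x hx.1).sub ((hasDerivWithinAt_id x _).mul_const _))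
    (fun x hx => by
      rw [one_mul, Real.norm_eq_abs]
      refine (h1 x hx.1).trans ?_
      exact mul_le_mul_of_nonneg_left hx.2.le (by positivity)) t ⟨ht, le_rfl⟩
  rw [PP_zero E v (depN_cont h), Real.norm_eq_abs] at this
  calc _ = |PP E t v ω - t * LL E.p n v ω - (v ω - 0 * LL E.p n v ω)| := by congr 1; ring
    _ ≤ _ := this
    _ = _ := by ring

/-! ### Initial data and pointwise lower bound -/

lemma MM_one (E : EastPlus) (Φ : ConfigP → ℝ) (η : ConfigP) : MM E 1 Φ η = Φ η := by
  have h : ∀ ω, Φ (glue 1 ω η) = (fun _ : ConfigP => Φ η) (glue 1 ω η) := by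
    intro ω
    have : glue 1 ω η = η := by
      funext x
      have := x.2
      have h1 : ¬ x.1 < 1 := by omega
      simp only [glue, h1, if_false]
    rw [this]
  rw [MM_congr E 1 Φ (fun _ => Φ η) η h, MM_const]

lemma MM_nonneg (E : EastPlus) (z : ℕ) (Φ : ConfigP → ℝ) (h : ∀ ω, 0 ≤ Φ ω) (η : ConfigP) :
    0 ≤ MM E z Φ η := integral_nonneg (fun _ => h _)

lemma min_pos' (E : EastPlus) : 0 < min E.p (1 - E.p) :=
  lt_min E.hp0 (by linarith [E.hp1])

lemma MM_lower (E : EastPlus) (Φ : ConfigP → ℝ) (h : ∀ ω, 0 ≤ Φ ω) (j : ℕ) :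
    ∀ η, min E.p (1 - E.p) ^ j * Φ η ≤ MM E (j + 1) Φ η := by
  induction j with
  | zero => intro η; simp [MM_one]
  | succ j ih =>
    intro η
    have h0 := min_pos' E
    have hs := MM_succ E ⟨j + 1, Nat.succ_pos j⟩ Φ η
    simp only at hs
    rw [hs]
    set m := min E.p (1 - E.p) with hm
    have m1 : m ≤ E.p := min_le_left _ _
    have m2 : m ≤ 1 - E.p := min_le_right _ _
    have n1 := MM_nonneg E (j + 1) Φ h (Function.update η ⟨j + 1, Nat.succ_pos j⟩ true)
    have n2 := MM_nonneg E (j + 1) Φ h (Function.update η ⟨j + 1, Nat.succ_pos j⟩ false)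
    have hself := Function.update_eq_self (⟨j + 1, Nat.succ_pos j⟩ : PosNat) η
    have i := ih η
    have key : m ^ (j + 1) * Φ η ≤ m * MM E (j + 1) Φ η := by
      rw [pow_succ]
      nlinarith
    have q1 : 0 ≤ E.p := E.hp0.le
    have q2 : 0 ≤ 1 - E.p := by linarith [E.hp1]
    rcases hb : η ⟨j + 1, Nat.succ_pos j⟩ with _ | _
    · rw [hb] at hself
      rw [hself] at n2 ⊢
      nlinarith [mul_nonneg q1 n1, mul_le_mul_of_nonneg_right m2 n2]
    · rw [hb] at hself
      rw [hself] at n1 ⊢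
      nlinarith [mul_nonneg q2 n2, mul_le_mul_of_nonneg_right m1 n1]

lemma MM_mean0 (E : EastPlus) (g : ConfigP → ℝ) (hg : ∀ η, avg1P E.p g η = 0) (j : ℕ) :
    ∀ η, MM E (j + 2) g η = 0 := by
  induction j with
  | zero =>
    intro η
    have hs := MM_succ E onePos g η
    simp only [onePos, MM_one] at hs
    exact hs.trans (hg η)
  | succ j ih =>
    intro η
    have hs := MM_succ E ⟨j + 2, Nat.succ_pos _⟩ g η
    simp only [ih] at hs
    simpa using hs

lemma avg_g (p : ℝ) (f : ConfigP → ℝ) (η : ConfigP) :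
    avg1P p (fun ω => f ω - avg1P p f ω) η = 0 := by
  simp only [avg1P, Function.update_idem]
  ring

/-! ### Euler iteration -/

def VV (p ε : ℝ) (n : ℕ) (g : ConfigP → ℝ) : ℕ → ConfigP → ℝ
  | 0 => g
  | j + 1 => KK p ε n (VV p ε n g j)

lemma tau_eq (n : ℕ) (ω : ConfigP) (x : PosNat) (hx : x.1 ≤ n) : tau n ω x = ω x := by
  simp [tau, hx]

lemma LL_tau (E : EastPlus) (n : ℕ) (hn : 1 ≤ n) (v : ConfigP → ℝ) (hd : DepN n v) (C : ℝ)
    (hv : ∀ x ∈ sites n, ∀ ω, Zn n ω → |v (flipAtP ω x) - v ω| ≤ C * (1 / 2) ^ x.1)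
    (ω : ConfigP) : |LL E.p n v ω - LL E.p n v (tau n ω)| ≤ C * (1 / 2) ^ n := by
  have e1 : v (tau n ω) = v ω := hd _ _ (fun x hx => tau_eq n ω x hx)
  have e2 : ∀ x : PosNat, x.1 ≤ n → v (flipAtP (tau n ω) x) = v (flipAtP ω x) := by
    intro x hx
    apply hd
    intro y hy
    simp only [flipAtP, tau_eq n ω x hx, tau_eq n ω y hy]
  unfold LL
  rw [← Finset.sum_sub_distrib, Finset.sum_eq_single (⟨n, hn⟩ : PosNat)]
  · have h := hv ⟨n, hn⟩ (mem_sites.2 le_rfl) (tau n ω) (tau_Zn n ω)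
    rw [e2 ⟨n, hn⟩ le_rfl, e1] at h ⊢
    rw [← sub_mul, abs_mul]
    have hr : |rate E.p ω ⟨n, hn⟩ - rate E.p (tau n ω) ⟨n, hn⟩| ≤ 1 := by
      rw [abs_le]
      constructor <;> linarith [rate_nonneg E ω ⟨n, hn⟩, rate_le_one E ω ⟨n, hn⟩,
        rate_nonneg E (tau n ω) ⟨n, hn⟩, rate_le_one E (tau n ω) ⟨n, hn⟩]
    calc _ ≤ 1 * |v (flipAtP ω ⟨n, hn⟩) - v ω| := mul_le_mul_of_nonneg_right hr (abs_nonneg _)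
      _ ≤ _ := by rw [one_mul]; exact h
  · intro x hx hxn
    have hx' := mem_sites.1 hx
    have hlt : x.1 + 1 ≤ n := by
      rcases Nat.lt_or_ge x.1 n with h | h
      · exact h
      · exact absurd (Subtype.ext (le_antisymm hx' h)) hxn
    have hr : rate E.p (tau n ω) x = rate E.p ω x := by
      unfold rate
      rw [tau_eq n ω x hx', tau_eq n ω (succP x) hlt]
    rw [e2 x hx', e1, hr, sub_self]
  · intro h
    exact absurd (mem_sites.2 le_rfl) h

structure Good (E : EastPlus) (ε : ℝ) (n : ℕ) (g : ConfigP → ℝ) (b C : ℝ) (j : ℕ) : Prop where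
  dep : DepN n (VV E.p ε n g j)
  bd : ∀ ω, |VV E.p ε n g j ω| ≤ b
  grad : ∀ x ∈ sites n, ∀ ω, Zn n ω →
    |VV E.p ε n g j (flipAtP ω x) - VV E.p ε n g j ω| ≤ (C * (1 + 6 * ε) ^ j) * (1 / 2) ^ x.1
  mean : ∀ z η, Adm n z η → MM E z.1 (VV E.p ε n g j) η = 0
  sq : ∀ z η, Adm n z η → MM E z.1 (fun ω => VV E.p ε n g j ω ^ 2) η ≤
    (1 - 2 * ε * gapZ E.p E.μ) ^ j * b ^ 2 + j * (ε ^ 2 * (2 * n * b) ^ 2)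
  comp : ∀ ω, |PP E (j * ε) g ω - VV E.p ε n g j ω| ≤
    j * ((2 * (n + 1) * (2 * n * b)) * ε ^ 2 + ε * (C * (1 + 6 * ε) ^ j * (1 / 2) ^ n))

lemma euler (E : EastPlus) (hgap : 0 < gapZ E.p E.μ) (ε : ℝ) (hε : 0 ≤ ε) (n : ℕ) (hn : 1 ≤ n)
    (hεn : ε * (2 * gapZ E.p E.μ + n) ≤ 1) (g : ConfigP → ℝ) (b C : ℝ) (hC : 0 ≤ C)
    (hd : DepN n g) (hb : ∀ ω, |g ω| ≤ b)
    (hgr : ∀ x ∈ sites n, ∀ ω, Zn n ω → |g (flipAtP ω x) - g ω| ≤ C * (1 / 2) ^ x.1)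
    (hM : ∀ z η, Adm n z η → MM E z.1 g η = 0) (j : ℕ) : Good E ε n g b C j := by
  set γ := gapZ E.p E.μ with hγ
  have hεγ : 0 ≤ ε * γ := mul_nonneg hε hgap.le
  have hεn0 : 0 ≤ ε * n := mul_nonneg hε (Nat.cast_nonneg n)
  have hεn' : ε * n ≤ 1 := by nlinarith
  induction j with
  | zero =>
    refine ⟨hd, hb, ?_, hM, ?_, ?_⟩
    · simpa [VV] using hgr
    · intro z η _
      simp only [VV, pow_zero, one_mul, Nat.cast_zero, zero_mul, add_zero]
      rw [← MM_const E z.1 (b ^ 2) η]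
      exact MM_mono E z.1 _ _ η (fun ω => sq_le_sq' (neg_le_of_abs_le (hb _)) (le_of_abs_le (hb _)))
    · intro ω
      simp [VV, PP_zero E g (depN_cont hd)]
  | succ j ih =>
    have hCj : 0 ≤ C * (1 + 6 * ε) ^ j := by positivity
    refine ⟨KK_dep _ _ _ _, sup_step E ε hε n hεn' _ b ih.bd, ?_, mean_step E ε n _ ih.mean, ?_, ?_⟩
    · have := grad_step E ε hε n hεn' _ _ hCj ih.grad
      intro x hx ω hω
      have := this x hx ω hω
      rw [pow_succ, ← mul_assoc]
      exact this
    · intro z η hA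
      have h1 := square_step E hgap ε hε n hεn _ b _ ih.bd ih.mean ih.sq z η hA
      refine h1.trans ?_
      rw [← hγ]
      push_cast
      have hS : 0 ≤ (j : ℝ) * (ε ^ 2 * (2 * n * b) ^ 2) := by positivity
      rw [pow_succ (1 - 2 * ε * γ) j]
      nlinarith [mul_nonneg hεγ hS]
    · intro ω
      set v := VV E.p ε n g j with hv
      have hj : 0 ≤ (j : ℝ) * ε := by positivity
      have hcv := depN_cont ih.dep
      have hcg : Continuous (PP E (j * ε) g) := E.feller (j * ε) hj g (depN_cont hd)
      have e1 : PP E (((j + 1 : ℕ) : ℝ) * ε) g ω = PP E ε (PP E (j * ε) g) ω := by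
        rw [← PP_semigroup E (j * ε) ε hj hε g (depN_cont hd) ω]
        congr 1
        push_cast
        ring
      have h1 : |PP E ε (PP E (j * ε) g) ω - PP E ε v ω| ≤
          j * ((2 * (n + 1) * (2 * n * b)) * ε ^ 2 + ε * (C * (1 + 6 * ε) ^ j * (1 / 2) ^ n)) := by
        rw [← PP_sub E ε _ _ hcg hcv]
        exact PP_abs_le E ε _ _ ih.comp ω
      have h2 := PP_second E ih.dep b ih.bd ω ε hε
      have h3 := LL_tau E n hn v ih.dep _ ih.grad ω
      have e2 : v (tau n ω) = v ω := ih.dep _ _ (fun x hx => tau_eq n ω x hx)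
      have e3 : VV E.p ε n g (j + 1) ω = v ω + ε * LL E.p n v (tau n ω) := by
        change KK E.p ε n v ω = _
        unfold KK
        rw [e2]
      rw [e1, e3]
      have h4 : |ε * LL E.p n v ω - ε * LL E.p n v (tau n ω)| ≤
          ε * (C * (1 + 6 * ε) ^ j * (1 / 2) ^ n) := by
        rw [← mul_sub, abs_mul, abs_of_nonneg hε]
        exact mul_le_mul_of_nonneg_left h3 hε
      have hmono : C * (1 + 6 * ε) ^ j * (1 / 2) ^ n ≤ C * (1 + 6 * ε) ^ (j + 1) * (1 / 2) ^ n := by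
        have : (1 + 6 * ε) ^ j ≤ (1 + 6 * ε) ^ (j + 1) :=
          pow_le_pow_right₀ (by linarith) (Nat.le_succ j)
        gcongr
      have hmono' := mul_le_mul_of_nonneg_left hmono hε
      push_cast
      have hj' : (0 : ℝ) ≤ j := Nat.cast_nonneg j
      have h5 := mul_le_mul_of_nonneg_left hmono' (by linarith : (0 : ℝ) ≤ (j : ℝ) + 1)
      have tri : |PP E ε (PP E (j * ε) g) ω - (v ω + ε * LL E.p n v (tau n ω))| ≤
          |PP E ε (PP E (j * ε) g) ω - PP E ε v ω| +
          |PP E ε v ω - v ω - ε * LL E.p n v ω| +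
          |ε * LL E.p n v ω - ε * LL E.p n v (tau n ω)| := by
        refine le_trans (le_of_eq ?_) (abs_add_three _ _ _)
        congr 1
        ring
      linarith
/-! ### Cylinder functions -/

lemma avg_dep (p : ℝ) {k : ℕ} {f : ConfigP → ℝ} (h : DepN k f) : DepN k (avg1P p f) := by
  intro ω ω' hω
  have : ∀ b, f (Function.update ω onePos b) = f (Function.update ω' onePos b) := by
    intro b
    apply h
    intro x hx
    by_cases h1 : x = onePos
    · subst h1; simp
    · simp [h1, hω x hx]
  simp only [avg1P, this]

lemma avg_abs (E : EastPlus) (f : ConfigP → ℝ) (B : ℝ) (hB : ∀ η, |f η| ≤ B) (η : ConfigP) :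
    |avg1P E.p f η| ≤ B := by
  have h0 := E.hp0
  have h1 := E.hp1
  have a1 := abs_le.1 (hB (Function.update η onePos true))
  have a2 := abs_le.1 (hB (Function.update η onePos false))
  unfold avg1P
  rw [abs_le]
  constructor <;> nlinarith

lemma finite_bound (E : EastPlus) (hgap : 0 < gapZ E.p E.μ) (ω : ConfigP) (z : PosNat)
    (hz : 1 < z.1) (hz0 : ω z = false) (k : ℕ) (g : ConfigP → ℝ) (hd : DepN k g) (b : ℝ)
    (hb : ∀ η, |g η| ≤ b) (hg : ∀ η, avg1P E.p g η = 0) (t : ℝ) (ht : 0 ≤ t)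
    (n m : ℕ) (hkn : k ≤ n) (hzn : z.1 ≤ n) (hm : 0 < m)
    (hmn : t / m * (2 * gapZ E.p E.μ + n) ≤ 1) :
    |PP E t g ω| ≤ Real.sqrt ((1 / min E.p (1 - E.p)) ^ z.1 *
        (Real.exp (-t * gapZ E.p E.μ) ^ 2 * b ^ 2 + (t ^ 2 * (2 * n * b) ^ 2) / m)) +
      ((2 * (n + 1) * (2 * n * b)) * t ^ 2 / m +
        t * (2 * b * 2 ^ k * Real.exp (6 * t)) * (1 / 2) ^ n) := by
  have hb0 : 0 ≤ b := (abs_nonneg _).trans (hb ω)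
  have hm' : (0 : ℝ) < m := by exact_mod_cast hm
  set γ := gapZ E.p E.μ with hγ
  set ε := t / m with hε
  have hε0 : 0 ≤ ε := by positivity
  have hmε : m * ε = t := by rw [hε]; field_simp
  have hdn : DepN n g := fun ω ω' h => hd ω ω' (fun x hx => h x (hx.trans hkn))
  have hgr : ∀ x ∈ sites n, ∀ ω, Zn n ω →
      |g (flipAtP ω x) - g ω| ≤ (2 * b * 2 ^ k) * (1 / 2) ^ x.1 := by
    intro x _ η _
    by_cases hx : x.1 ≤ k
    · have h1 : |g (flipAtP η x) - g η| ≤ 2 * b := by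
        refine (abs_sub _ _).trans ?_
        linarith [hb (flipAtP η x), hb η]
      have h2 : (1 : ℝ) ≤ 2 ^ k * (1 / 2) ^ x.1 := by
        rw [one_div, inv_pow, ← div_eq_mul_inv, le_div_iff₀ (by positivity), one_mul]
        exact pow_le_pow_right₀ (by norm_num) hx
      rw [mul_assoc]
      nlinarith
    · have : g (flipAtP η x) = g η := by
        apply hd
        intro y hy
        have : y ≠ x := by rintro rfl; exact hx hy
        simp [flipAtP, this]
      rw [this, sub_self, abs_zero]
      positivity
  have hM : ∀ z η, Adm n z η → MM E z.1 g η = 0 := by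
    intro z η hA
    have := MM_mean0 E g hg (z.1 - 2) η
    have e : z.1 - 2 + 2 = z.1 := by have := hA.two; omega
    rwa [e] at this
  have G := euler E hgap ε hε0 n (by omega) hmn g b (2 * b * 2 ^ k) (by positivity) hdn hb hgr hM m
  set v := VV E.p ε n g m with hv
  have hA : Adm n z (tau n ω) := ⟨hz, by omega, tau_Zn n ω, by rw [tau_eq n ω z hzn, hz0]⟩
  have e2 : v (tau n ω) = v ω := G.dep _ _ (fun x hx => tau_eq n ω x hx)
  have hlow := MM_lower E (fun ω => v ω ^ 2) (fun ω => sq_nonneg _) (z.1 - 1) (tau n ω)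
  rw [Nat.sub_add_cancel (by omega : 1 ≤ z.1)] at hlow
  have hsq := hlow.trans (G.sq z _ hA)
  simp only [e2] at hsq
  have hmin := min_pos' E
  have hmin1 : min E.p (1 - E.p) ≤ 1 := (min_le_left _ _).trans E.hp1.le
  set w := min E.p (1 - E.p) with hw
  have hεγ : 0 ≤ 1 - 2 * ε * γ := by
    have : 0 ≤ ε * n := by positivity
    nlinarith
  have hexp : (1 - 2 * ε * γ) ^ m ≤ Real.exp (-t * γ) ^ 2 := by
    calc (1 - 2 * ε * γ) ^ m ≤ Real.exp (-(2 * ε * γ)) ^ m :=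
          pow_le_pow_left₀ hεγ (Real.one_sub_le_exp_neg _) m
      _ = Real.exp (-t * γ) ^ 2 := by
          rw [← Real.exp_nat_mul, ← Real.exp_nat_mul]
          congr 1
          rw [← hmε]
          push_cast
          ring
  have hexp6 : (1 + 6 * ε) ^ m ≤ Real.exp (6 * t) := by
    calc (1 + 6 * ε) ^ m ≤ Real.exp (6 * ε) ^ m := by
          refine pow_le_pow_left₀ (by positivity) ?_ m
          linarith [Real.add_one_le_exp (6 * ε)]
      _ = Real.exp (6 * t) := by
          rw [← Real.exp_nat_mul]
          congr 1
          rw [← hmε]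
          ring
  have hq : m * (ε ^ 2 * (2 * n * b) ^ 2) = (t ^ 2 * (2 * n * b) ^ 2) / m := by
    rw [hε]; field_simp
  have hfin : v ω ^ 2 ≤ (1 / w) ^ z.1 *
      (Real.exp (-t * γ) ^ 2 * b ^ 2 + (t ^ 2 * (2 * n * b) ^ 2) / m) := by
    rw [one_div, inv_pow, inv_mul_eq_div, le_div_iff₀ (by positivity)]
    have hpw : w ^ z.1 ≤ w ^ (z.1 - 1) := pow_le_pow_of_le_one hmin.le hmin1 (by omega)
    calc v ω ^ 2 * w ^ z.1 ≤ w ^ (z.1 - 1) * v ω ^ 2 := by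
          rw [mul_comm]
          exact mul_le_mul_of_nonneg_right hpw (sq_nonneg _)
      _ ≤ _ := hsq
      _ ≤ _ := by
          rw [hq]
          have := mul_le_mul_of_nonneg_right hexp (sq_nonneg b)
          linarith
  have hv' := Real.abs_le_sqrt hfin
  have hc := G.comp ω
  rw [hmε] at hc
  have hc2 : m * ((2 * (n + 1) * (2 * n * b)) * ε ^ 2 +
      ε * (2 * b * 2 ^ k * (1 + 6 * ε) ^ m * (1 / 2) ^ n)) ≤
      ((2 * (n + 1) * (2 * n * b)) * t ^ 2 / m +
        t * (2 * b * 2 ^ k * Real.exp (6 * t)) * (1 / 2) ^ n) := by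
    have e1 : m * ((2 * (n + 1) * (2 * n * b)) * ε ^ 2 +
      ε * (2 * b * 2 ^ k * (1 + 6 * ε) ^ m * (1 / 2) ^ n)) =
      (2 * (n + 1) * (2 * n * b)) * t ^ 2 / m +
        t * (2 * b * 2 ^ k * (1 + 6 * ε) ^ m) * (1 / 2) ^ n := by
      rw [← hmε]
      field_simp
    rw [e1]
    gcongr
  have := abs_sub_abs_le_abs_sub (PP E t g ω) (v ω)
  linarith

lemma cyl_bound (E : EastPlus) (hgap : 0 < gapZ E.p E.μ) (ω : ConfigP) (z : PosNat)
    (hz : 1 < z.1) (hz0 : ω z = false) (k : ℕ) (f : ConfigP → ℝ) (hd : DepN k f) (B : ℝ)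
    (hB : ∀ η, |f η| ≤ B) (t : ℝ) (ht : 0 ≤ t) :
    |PP E t f ω - PP E t (avg1P E.p f) ω| ≤
      Real.sqrt 2 * B * (1 / min E.p (1 - E.p)) ^ z.1 * Real.exp (-t * gapZ E.p E.μ) := by
  have hB0 : 0 ≤ B := (abs_nonneg _).trans (hB ω)
  rw [← PP_sub E t _ _ (depN_cont hd) (depN_cont (avg_dep E.p hd))]
  set g : ConfigP → ℝ := fun ω => f ω - avg1P E.p f ω with hg
  have hdg : DepN k g := by
    intro η η' h
    simp only [hg, hd η η' h, avg_dep E.p hd η η' h]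
  have hbg : ∀ η, |g η| ≤ 2 * B := by
    intro η
    refine (abs_sub _ _).trans ?_
    linarith [hB η, avg_abs E f B hB η]
  have hav : ∀ η, avg1P E.p g η = 0 := avg_g E.p f
  have hmin := min_pos' E
  have hminh : min E.p (1 - E.p) ≤ 1 / 2 := by
    rcases le_total E.p (1 - E.p) with h | h
    · exact (min_le_left _ _).trans (by linarith)
    · exact (min_le_right _ _).trans (by linarith)
  set w := min E.p (1 - E.p) with hw
  set γ := gapZ E.p E.μ with hγ
  set b := 2 * B with hb
  have tend1 : ∀ a : ℝ, Tendsto (fun m : ℕ => a / (m : ℝ)) atTop (nhds 0) :=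
    fun a => tendsto_const_div_atTop_nhds_zero_nat a
  have step1 : ∀ n : ℕ, k ≤ n → z.1 ≤ n →
      |PP E t g ω| ≤ Real.sqrt ((1 / w) ^ z.1 * (Real.exp (-t * γ) ^ 2 * b ^ 2 + 0)) +
        (0 + t * (2 * b * 2 ^ k * Real.exp (6 * t)) * (1 / 2) ^ n) := by
    intro n hkn hzn
    have hlim := ((((tend1 (t ^ 2 * (2 * n * b) ^ 2)).const_add
      (Real.exp (-t * γ) ^ 2 * b ^ 2)).const_mul ((1 / w) ^ z.1)).sqrt).add
      ((tend1 ((2 * (n + 1) * (2 * n * b)) * t ^ 2)).add_const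
        (t * (2 * b * 2 ^ k * Real.exp (6 * t)) * (1 / 2) ^ n))
    refine ge_of_tendsto hlim ?_
    have hev : ∀ᶠ m : ℕ in atTop, t * (2 * γ + n) / (m : ℝ) ≤ 1 :=
      (tend1 (t * (2 * γ + n))).eventually_le_const (by norm_num)
    filter_upwards [hev, eventually_gt_atTop 0] with m hm1 hm0
    exact finite_bound E hgap ω z hz hz0 k g hdg b hbg hav t ht n m hkn hzn hm0
      (by rw [div_mul_eq_mul_div]; exact hm1)
  have step2 : |PP E t g ω| ≤
      Real.sqrt ((1 / w) ^ z.1 * (Real.exp (-t * γ) ^ 2 * b ^ 2 + 0)) +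
        (0 + t * (2 * b * 2 ^ k * Real.exp (6 * t)) * 0) := by
    have hp : Tendsto (fun n : ℕ => ((1 : ℝ) / 2) ^ n) atTop (nhds 0) :=
      tendsto_pow_atTop_nhds_zero_of_lt_one (by norm_num) (by norm_num)
    have hlim := ((hp.const_mul (t * (2 * b * 2 ^ k * Real.exp (6 * t)))).const_add 0).const_add
      (Real.sqrt ((1 / w) ^ z.1 * (Real.exp (-t * γ) ^ 2 * b ^ 2 + 0)))
    refine ge_of_tendsto hlim ?_
    filter_upwards [eventually_ge_atTop (max k z.1)] with n hn
    exact step1 n ((le_max_left _ _).trans hn) ((le_max_right _ _).trans hn)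
  refine step2.trans ?_
  rw [mul_zero, add_zero, add_zero, add_zero]
  have hw2 : 2 ≤ 1 / w := by rw [le_div_iff₀ hmin]; linarith
  have hM2 : 2 ≤ (1 / w) ^ z.1 := hw2.trans (le_self_pow₀ (by linarith) (by omega))
  set M := (1 / w) ^ z.1 with hM
  refine Real.sqrt_le_iff.2 ⟨by positivity, ?_⟩
  have h2 : Real.sqrt 2 ^ 2 = 2 := Real.sq_sqrt (by norm_num)
  have e : (Real.sqrt 2 * B * M * Real.exp (-t * γ)) ^ 2 =
      M * (2 * M) * (Real.exp (-t * γ) ^ 2 * B ^ 2) := by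
    rw [mul_pow, mul_pow, mul_pow, h2]; ring
  rw [e, hb]
  have hX : 0 ≤ M * (Real.exp (-t * γ) ^ 2 * B ^ 2) := by positivity
  nlinarith

/-! ### Extension to continuous and to bounded measurable functions -/

lemma tau_tendsto (ω : ConfigP) : Tendsto (fun n => tau n ω) atTop (nhds ω) := by
  rw [tendsto_pi_nhds]
  intro x
  refine tendsto_const_nhds.congr' ?_
  filter_upwards [eventually_ge_atTop x.1] with n hn
  exact (tau_eq n ω x hn).symm

lemma tau_dep (f : ConfigP → ℝ) (n : ℕ) : DepN n (fun ω => f (tau n ω)) := by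
  intro ω ω' h
  have : tau n ω = tau n ω' := by
    funext x
    by_cases hx : x.1 ≤ n
    · simp [tau, hx, h x hx]
    · simp [tau, hx]
  simp only [this]

lemma PP_tendsto (E : EastPlus) (t : ℝ) (F : ℕ → ConfigP → ℝ) (f : ConfigP → ℝ)
    (hF : ∀ n, Continuous (F n)) (B : ℝ) (hB : ∀ n η, |F n η| ≤ B)
    (hlim : ∀ η, Tendsto (fun n => F n η) atTop (nhds (f η))) (ω : ConfigP) :
    Tendsto (fun n => PP E t (F n) ω) atTop (nhds (PP E t f ω)) := by
  have := E.markov t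
  exact tendsto_integral_of_dominated_convergence (fun _ => B)
    (fun n => (hF n).measurable.aestronglyMeasurable) (integrable_const B)
    (fun n => Eventually.of_forall (hB n)) (Eventually.of_forall hlim)

lemma cont_bound (E : EastPlus) (hgap : 0 < gapZ E.p E.μ) (ω : ConfigP) (z : PosNat)
    (hz : 1 < z.1) (hz0 : ω z = false) (f : ConfigP → ℝ) (hf : Continuous f) (B : ℝ)
    (hB : ∀ η, |f η| ≤ B) (t : ℝ) (ht : 0 ≤ t) :
    |PP E t f ω - PP E t (avg1P E.p f) ω| ≤
      Real.sqrt 2 * B * (1 / min E.p (1 - E.p)) ^ z.1 * Real.exp (-t * gapZ E.p E.μ) := by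
  have hl : ∀ η, Tendsto (fun n => f (tau n η)) atTop (nhds (f η)) :=
    fun η => (hf.tendsto η).comp (tau_tendsto η)
  have l1 := PP_tendsto E t (fun n η => f (tau n η)) f (fun n => depN_cont (tau_dep f n)) B
    (fun n η => hB _) hl ω
  have l2 := PP_tendsto E t (fun n => avg1P E.p (fun η => f (tau n η))) (avg1P E.p f)
    (fun n => depN_cont (avg_dep E.p (tau_dep f n))) B
    (fun n η => avg_abs E _ B (fun η => hB _) η)
    (fun η => ((hl _).const_mul _).add ((hl _).const_mul _)) ω
  refine le_of_tendsto (l1.sub l2).abs (Eventually.of_forall fun n => ?_)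
  exact cyl_bound E hgap ω z hz hz0 n _ (tau_dep f n) B (fun η => hB _) t ht

lemma clamp_le (a c B : ℝ) (ha : |a| ≤ B) : |a - max (-B) (min B c)| ≤ |a - c| := by
  have h1 := abs_le.1 ha
  rcases le_total B c with h | h
  · rw [min_eq_left h, max_eq_right (by linarith), abs_sub_comm, abs_sub_comm a c,
      abs_of_nonneg (by linarith), abs_of_nonneg (by linarith)]
    linarith
  · rw [min_eq_right h]
    rcases le_total c (-B) with h' | h'
    · rw [max_eq_left h', abs_of_nonneg (by linarith), abs_of_nonneg (by linarith)]
      linarith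
    · rw [max_eq_right h']

lemma avg_diff (p : ℝ) (hp0 : 0 < p) (hp1 : p < 1) (ν : Measure ConfigP) [IsProbabilityMeasure ν]
    (f : ConfigP → ℝ) (hf : Measurable f) (B : ℝ) (hB : ∀ η, |f η| ≤ B) (δ : ℝ) (hδ : 0 < δ) :
    ∃ g : ConfigP → ℝ, Continuous g ∧ (∀ η, |g η| ≤ B) ∧
      |(∫ η, f η ∂ν) - ∫ η, g η ∂ν| ≤ δ ∧
      |(∫ η, avg1P p f η ∂ν) - ∫ η, avg1P p g η ∂ν| ≤ δ := by
  have hu : ∀ b, Measurable (fun η : ConfigP => Function.update η onePos b) :=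
    fun b => (continuous_id.update onePos continuous_const).measurable
  set m : Measure ConfigP := ν + (ν.map (fun η => Function.update η onePos true) +
    ν.map (fun η => Function.update η onePos false)) with hm
  have hpm : ∀ b, IsProbabilityMeasure (ν.map (fun η : ConfigP => Function.update η onePos b)) :=
    fun b => Measure.isProbabilityMeasure_map (hu b).aemeasurable
  have := hpm true
  have := hpm false
  have hB0 : 0 ≤ B := (abs_nonneg _).trans (hB (fun _ => false))
  have hfi : Integrable f m := Integrable.of_bound hf.aestronglyMeasurable B
    (Eventually.of_forall hB)
  obtain ⟨g0, hg0, -⟩ := hfi.exists_boundedContinuous_integral_sub_le hδ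
  set g : ConfigP → ℝ := fun η => max (-B) (min B (g0 η)) with hg
  have hgc : Continuous g := continuous_const.max (continuous_const.min g0.continuous)
  have hgB : ∀ η, |g η| ≤ B := by
    intro η
    rw [abs_le]
    exact ⟨le_max_left _ _, max_le (by linarith) (min_le_left _ _)⟩
  have hD : Measurable (fun η => |f η - g η|) := (hf.sub hgc.measurable).abs
  have hDi : ∀ (μ : Measure ConfigP) [IsFiniteMeasure μ], Integrable (fun η => |f η - g η|) μ :=
    fun μ _ => Integrable.of_bound hD.aestronglyMeasurable (2 * B) (Eventually.of_forall fun η => by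
      rw [Real.norm_eq_abs, abs_abs]
      refine (abs_sub _ _).trans ?_
      linarith [hB η, hgB η])
  have hI : ∀ F : ConfigP → ℝ, Measurable F → (∀ η, |F η| ≤ B) → Integrable F ν :=
    fun F hF hFB => Integrable.of_bound hF.aestronglyMeasurable B (Eventually.of_forall hFB)
  have htot : ∫ η, |f η - g η| ∂m ≤ δ := by
    refine le_trans (integral_mono (hDi m) ?_ (fun η => ?_)) hg0
    · exact (hfi.sub (g0.integrable m)).norm
    · exact clamp_le _ _ _ (hB η)
  rw [hm, integral_add_measure (hDi _) (hDi _), integral_add_measure (hDi _) (hDi _),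
    integral_map (hu _).aemeasurable hD.aestronglyMeasurable,
    integral_map (hu _).aemeasurable hD.aestronglyMeasurable] at htot
  have n0 : 0 ≤ ∫ η, |f η - g η| ∂ν := integral_nonneg (fun _ => abs_nonneg _)
  have nb : ∀ b, 0 ≤ ∫ η, |f (Function.update η onePos b) - g (Function.update η onePos b)| ∂ν :=
    fun b => integral_nonneg (fun _ => abs_nonneg _)
  have n1 := nb true
  have n2 := nb false
  refine ⟨g, hgc, hgB, ?_, ?_⟩
  · rw [← integral_sub (hI f hf hB) (hI g hgc.measurable hgB)]
    refine (abs_integral_le_integral_abs).trans ?_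
    linarith
  · have hIf : ∀ b, Integrable (fun η => f (Function.update η onePos b)) ν :=
      fun b => hI _ (hf.comp (hu b)) (fun η => hB _)
    have hIg : ∀ b, Integrable (fun η => g (Function.update η onePos b)) ν :=
      fun b => hI _ (hgc.measurable.comp (hu b)) (fun η => hgB _)
    have hdb : ∀ b, |(∫ η, f (Function.update η onePos b) ∂ν) -
        ∫ η, g (Function.update η onePos b) ∂ν| ≤
        ∫ η, |f (Function.update η onePos b) - g (Function.update η onePos b)| ∂ν := by
      intro b
      rw [← integral_sub (hIf b) (hIg b)]
      exact abs_integral_le_integral_abs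
    have hsplit : ∀ F : ConfigP → ℝ, (∀ b, Integrable (fun η => F (Function.update η onePos b)) ν) →
        ∫ η, avg1P p F η ∂ν = p * ∫ η, F (Function.update η onePos true) ∂ν +
          (1 - p) * ∫ η, F (Function.update η onePos false) ∂ν := by
      intro F hF
      unfold avg1P
      rw [integral_add ((hF true).const_mul _) ((hF false).const_mul _), integral_const_mul,
        integral_const_mul]
    rw [hsplit f hIf, hsplit g hIg]
    have a1 := abs_le.1 ((hdb true).trans (by linarith : _ ≤ δ))
    have a2 := abs_le.1 ((hdb false).trans (by linarith : _ ≤ δ))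
    rw [abs_le]
    constructor <;> nlinarith

/-- **Relaxation to equilibrium on the left of a distinguished zero**
(Proposition 4.3 of the paper): if `ω ∈ {0,1}^{ℕ*}` has `ω_z = 0` for some `z > 1` and
`f` is a bounded measurable function on `{0,1}^{ℕ*}`, then for every `t ≥ 0`,
`|P_t⁺ f(ω) − P_t⁺(μ_{{1}}(f))(ω)| ≤ √2 ‖f‖_∞ (1/(p ∧ q))^z e^{-t gap}`. -/
theorem relaxation_left_of_zero (E : EastPlus) (hgap : 0 < gapZ E.p E.μ)
    (ω : ConfigP) (z : PosNat) (hz : 1 < z.1) (hz0 : ω z = false)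
    (f : ConfigP → ℝ) (hf : Measurable f) (B : ℝ) (hB : ∀ η, |f η| ≤ B)
    (t : ℝ) (ht : 0 ≤ t) :
    |(∫ η, f η ∂(E.Pp t ω)) - ∫ η, avg1P E.p f η ∂(E.Pp t ω)| ≤
      Real.sqrt 2 * B * (1 / min E.p (1 - E.p)) ^ z.1 * Real.exp (-t * gapZ E.p E.μ) := by
  have := E.markov t
  refine le_of_forall_pos_le_add (fun δ hδ => ?_)
  obtain ⟨g, hgc, hgB, h1, h2⟩ := avg_diff E.p E.hp0 E.hp1 (E.Pp t ω) f hf B hB (δ / 2) (by linarith)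
  have h3 := cont_bound E hgap ω z hz hz0 g hgc B hgB t ht
  unfold PP at h3
  rw [abs_le] at h1 h2 h3 ⊢
  constructor <;> linarith [h1.1, h1.2, h2.1, h2.2, h3.1, h3.2]

end
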